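/- Let n ≥ 7. Every transitive homomorphism ψ : B_n → Sym_{2n} is either cyclic or conjugate to one of the three Lin homomorphisms ρ_{L1}, ρ_{L2}, ρ_{L3} : B_n → Sym_{2n}. -/

import Mathlib

/-- The braid relations on `n-1` generators; generator `i : Fin (n-1)` stands for the
Artin generator `σ_{i+1}` (so the indexing is 0-based). The relations are
`σ_i σ_j = σ_j σ_i` for `|i-j| ≥ 2` and `σ_i σ_j σ_i = σ_j σ_i σ_j` for `|i-j| = 1`. -/
def braidRels (n : ℕ) : Set (FreeGroup (Fin (n - 1))) :=
  { r | ∃ i j : Fin (n - 1), ((i : ℕ) + 2 ≤ (j : ℕ) ∨ (j : ℕ) + 2 ≤ (i : ℕ)) ∧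
      r = FreeGroup.of i * FreeGroup.of j * (FreeGroup.of j * FreeGroup.of i)⁻¹ } ∪
  { r | ∃ i j : Fin (n - 1), (j : ℕ) = (i : ℕ) + 1 ∧
      r = FreeGroup.of i * FreeGroup.of j * FreeGroup.of i *
          (FreeGroup.of j * FreeGroup.of i * FreeGroup.of j)⁻¹ }

/-- The braid group `B_n`, given by the Artin presentation. -/
abbrev BraidGroup (n : ℕ) := PresentedGroup (braidRels n)

/-- The Artin generator `σ_{i+1}` of the braid group `B_n`, for `i : Fin (n-1)`. -/
def σ {n : ℕ} (i : Fin (n - 1)) : BraidGroup n := PresentedGroup.of i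

/-- A homomorphism to the symmetric group `Sym_k = Perm (Fin k)` is transitive if its
image acts transitively on the `k` points. -/
def IsTransitiveHom {G : Type*} [Group G] {k : ℕ} (φ : G →* Equiv.Perm (Fin k)) : Prop :=
  ∀ x y : Fin k, ∃ g : G, φ g x = y

/-- A homomorphism from `B_n` is cyclic if it sends all the generators `σ_1, …, σ_{n-1}`
to a single element. -/
def IsCyclicHom {n : ℕ} {H : Type*} [Group H] (ψ : BraidGroup n →* H) : Prop :=
  ∀ i j : Fin (n - 1), ψ (σ i) = ψ (σ j)

/-- The transposition `(j, n+j)` (0-based) in `Sym_{2n}`. -/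
def tw (n : ℕ) (j : Fin n) : Equiv.Perm (Fin (2 * n)) :=
  Equiv.swap ⟨j, by have := j.isLt; omega⟩ ⟨n + j, by have := j.isLt; omega⟩

/-- The 4-cycle `(a, b, c, d)` sending `a ↦ b ↦ c ↦ d ↦ a` (for pairwise distinct
points), written as the product of transpositions `(a d)(a c)(a b)`. -/
def cyc4 {m : ℕ} (a b c d : Fin m) : Equiv.Perm (Fin m) :=
  Equiv.swap a d * Equiv.swap a c * Equiv.swap a b

/-- `ρ_{L1}(σ_{i+1})`: the 4-cycle `(i, n+i+1, n+i, i+1)` on the 0-based points of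
`Sym_{2n}`, for `i : Fin (n-1)`. -/
def linL1Gen (n : ℕ) (i : Fin (n - 1)) : Equiv.Perm (Fin (2 * n)) :=
  cyc4 ⟨i, by have := i.isLt; omega⟩ ⟨n + i + 1, by have := i.isLt; omega⟩
    ⟨n + i, by have := i.isLt; omega⟩ ⟨(i : ℕ) + 1, by have := i.isLt; omega⟩

/-- The product `∏_{j < i} (j, n+j)` (0-based) in `Sym_{2n}`. -/
def lowTw (n : ℕ) (i : Fin (n - 1)) : Equiv.Perm (Fin (2 * n)) :=
  ((List.finRange n).map (fun j : Fin n => if (j : ℕ) < (i : ℕ) then tw n j else 1)).prod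

/-- The product `∏_{j ≥ i+2} (j, n+j)` (0-based) in `Sym_{2n}`. -/
def highTw (n : ℕ) (i : Fin (n - 1)) : Equiv.Perm (Fin (2 * n)) :=
  ((List.finRange n).map (fun j : Fin n => if (i : ℕ) + 2 ≤ (j : ℕ) then tw n j else 1)).prod

/-- `ρ_{L2}(σ_{i+1}) = ∏_{j<i}(j, n+j) · (i, n+i+1, n+i, i+1) · ∏_{j≥i+2}(j, n+j)`
(0-based) in `Sym_{2n}`. -/
def linL2Gen (n : ℕ) (i : Fin (n - 1)) : Equiv.Perm (Fin (2 * n)) :=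
  lowTw n i * linL1Gen n i * highTw n i

/-- `ρ_{L3}(σ_{i+1}) = ∏_{j<i}(j, n+j) · (i, n+i+1)(i+1, n+i) · ∏_{j≥i+2}(j, n+j)`
(0-based) in `Sym_{2n}`. -/
def linL3Gen (n : ℕ) (i : Fin (n - 1)) : Equiv.Perm (Fin (2 * n)) :=
  lowTw n i *
    (Equiv.swap ⟨i, by have := i.isLt; omega⟩ ⟨n + i + 1, by have := i.isLt; omega⟩ *
     Equiv.swap ⟨(i : ℕ) + 1, by have := i.isLt; omega⟩ ⟨n + i, by have := i.isLt; omega⟩) *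
  highTw n i

/-! Write `s i` for the image of `σ_{i+1}`, and suppose that the images are not all equal, which
happens as soon as `s 0 ≠ s 1`. The heart of the matter is a map `π` from the `2n` points to the `n`
strands which turns `s i` into the transposition `(i, i + 1)` of the strands.

If `s 0` is an involution, the action factors through `Sym_n`, and `π` exists because a subgroup `H`
of index `2n` must fix a strand. Indeed, a maximal set of strands on which no nontrivial element of
`H` is supported is small, since the permutations of such a set meet `H` trivially; this produces
two elements of `H` moving a single common strand, and their commutator is a 3-cycle. To be equal or
in a common 3-cycle of `H` is an equivalence relation. Translates of one of its classes that contain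
a given strand come from distinct cosets of `H`, so the index bounds their number, a binomial
coefficient, and a class containing a 3-cycle omits exactly one strand.

If `s 0` is not an involution, let `C i` be the set of points moved by `s i ^ 2`. The generators far
from `s 0` act on `C 0` through a centralizer, and permute fewer than `n - 2` cycles of `s 0`; by
Artin's theorem that braid groups on `m ≥ 5` strands act cyclically on fewer than `m` points, they
all agree on `C 0`. By transitivity `C i` and `C j` are then disjoint for `|i - j| ≥ 2`, and a count
forces `C i` to be the union of two adjacent fibres of `π`.

Finally the fibres of `π` are pairs, and exchanging the two points of every pair commutes with the
action. Up to conjugacy, the action is therefore determined by two bits: whether `s i` exchanges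
the points over the strands other than `i` and `i + 1`, and whether `s i ^ 2` does so over `i`. One
combination is not transitive and the other three are the Lin homomorphisms. -/

section

open Equiv Equiv.Perm

universe u

/-- A sequence satisfying the Artin relations of the braid group on `m` strands: `s i` plays the
role of `σ_{i+1}`, and the terms with `m ≤ i + 1` are unconstrained. -/
structure IsBraidSeq {G : Type*} [Mul G] (m : ℕ) (s : ℕ → G) : Prop where
  commute : ∀ ⦃i j⦄, i + 2 ≤ j → j + 1 < m → Commute (s i) (s j)
  braid : ∀ ⦃i⦄, i + 2 < m → s i * s (i + 1) * s i = s (i + 1) * s i * s (i + 1)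

theorem eq_of_commute_of_braid {G : Type*} [Group G] {a b : G} (hc : Commute a b)
    (hb : a * b * a = b * a * b) : a = b := by
  have : b * a * a = b * a * b := by rw [← hb, hc.eq]
  exact mul_left_cancel this

namespace IsBraidSeq

section Group

variable {G H : Type*} [Group G] [Group H] {m : ℕ} {s : ℕ → G}

theorem shift (hs : IsBraidSeq m s) (k : ℕ) : IsBraidSeq (m - k) (fun i => s (i + k)) where
  commute i j hij hj := hs.commute (by omega) (by omega)
  braid i hi := by
    have := hs.braid (i := i + k) (by omega)
    rwa [show i + k + 1 = i + 1 + k by omega] at this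

theorem reverse (hs : IsBraidSeq m s) : IsBraidSeq m (fun i => s (m - 2 - i)) where
  commute i j hij hj := (hs.commute (by omega) (by omega)).symm
  braid i hi := by
    have := hs.braid (i := m - 2 - (i + 1)) (by omega)
    rw [show m - 2 - (i + 1) + 1 = m - 2 - i by omega] at this
    exact this.symm

theorem map (hs : IsBraidSeq m s) (f : G →* H) : IsBraidSeq m (fun i => f (s i)) where
  commute _ _ hij hj := (hs.commute hij hj).map f
  braid _ hi := by simpa only [map_mul] using congrArg f (hs.braid hi)

theorem exists_lift (hs : IsBraidSeq m s) {K : Subgroup G} (hK : ∀ i, i + 1 < m → s i ∈ K) :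
    ∃ t : ℕ → K, IsBraidSeq m t ∧ ∀ i, i + 1 < m → (t i : G) = s i := by
  classical
  let t : ℕ → K := fun i => if hi : s i ∈ K then ⟨s i, hi⟩ else 1
  have ht : ∀ i, i + 1 < m → (t i : G) = s i := fun i hi => by simp [t, hK i hi]
  refine ⟨t, ⟨fun i j hij hj => ?_, fun i hi => ?_⟩, ht⟩
  · refine Subtype.ext ?_
    simpa [ht i (by omega), ht j hj] using (hs.commute hij hj).eq
  · refine Subtype.ext ?_
    simpa [ht i (by omega), ht (i + 1) hi] using hs.braid hi

theorem const_of_zero_eq_one (hs : IsBraidSeq m s) (h : s 0 = s 1) :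
    ∀ i, i + 1 < m → s i = s 0 := by
  intro i
  induction i with
  | zero => simp
  | succ i ih =>
    intro hi
    rcases i with _ | i
    · exact h.symm
    · have hc : Commute (s (i + 1)) (s (i + 2)) := by
        rw [ih (by omega)]; exact hs.commute (by omega) hi
      rw [← ih (by omega), eq_of_commute_of_braid hc (hs.braid hi)]

theorem const_of_map_const (hs : IsBraidSeq m s) (hm : 5 ≤ m) (f : G →* H)
    (hker : ∀ x y, f x = 1 → f y = 1 → Commute x y) (hf : ∀ i, i + 1 < m → f (s i) = f (s 0)) :
    ∀ i, i + 1 < m → s i = s 0 := by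
  refine hs.const_of_zero_eq_one ?_
  set a := s 0
  set b := s 1
  set d := s 3
  have had : Commute a d := hs.commute (by omega) (by omega)
  have hbd : Commute b d := hs.commute (by omega) (by omega)
  have hxy : Commute (a * d⁻¹) (b * d⁻¹) := by
    apply hker <;> rw [map_mul, map_inv, mul_inv_eq_one]
    · exact (hf 3 (by omega)).symm
    · exact (hf 1 (by omega)).trans (hf 3 (by omega)).symm
  have hab : Commute a b := by
    have hxd : Commute (a * d⁻¹) d := had.mul_left (Commute.refl d).inv_left
    have hyd : Commute (b * d⁻¹) d := hbd.mul_left (Commute.refl d).inv_left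
    have := (hxy.mul_right hxd).mul_left (hyd.symm.mul_right (Commute.refl d))
    simpa using this
  exact eq_of_commute_of_braid hab (hs.braid (by omega))

/-- The product `s 0 * ⋯ * s (k - 1)`, which conjugates `s i` to `s (i + 1)` for `i + 1 < k`. -/
def prefixProd (s : ℕ → G) : ℕ → G
  | 0 => 1
  | k + 1 => prefixProd s k * s k

theorem commute_prefixProd {g : G} {k : ℕ} (h : ∀ l < k, Commute (s l) g) :
    Commute (prefixProd s k) g := by
  induction k with
  | zero => exact Commute.one_left _
  | succ k ih => exact (ih fun l hl => h l (by omega)).mul_left (h k k.lt_succ_self)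

theorem prefixProd_succ_left (s : ℕ → G) (k : ℕ) :
    prefixProd s (k + 1) = s 0 * prefixProd (fun i => s (i + 1)) k := by
  induction k with
  | zero => simp [prefixProd]
  | succ k ih =>
    change prefixProd s (k + 1) * s (k + 1) = s 0 * (prefixProd (fun i => s (i + 1)) k * s (k + 1))
    rw [ih, mul_assoc]

theorem prefixProd_mul (hs : IsBraidSeq m s) {k i : ℕ} (hk : k < m) (hi : i + 1 < k) :
    prefixProd s k * s i = s (i + 1) * prefixProd s k := by
  induction k with
  | zero => omega
  | succ k ih =>
    change prefixProd s k * s k * s i = s (i + 1) * (prefixProd s k * s k)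
    rcases Nat.lt_or_ge (i + 1) k with hik | hik
    · rw [mul_assoc, ← (hs.commute hik hk).eq, ← mul_assoc, ih (by omega) hik, mul_assoc]
    · obtain rfl : k = i + 1 := by omega
      change prefixProd s i * s i * s (i + 1) * s i =
        s (i + 1) * (prefixProd s i * s i * s (i + 1))
      have hc : Commute (prefixProd s i) (s (i + 1)) :=
        commute_prefixProd fun l hl => hs.commute (by omega) hk
      calc prefixProd s i * s i * s (i + 1) * s i
          = prefixProd s i * (s i * s (i + 1) * s i) := by simp only [mul_assoc]
        _ = prefixProd s i * s (i + 1) * (s i * s (i + 1)) := by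
            rw [hs.braid hk]; simp only [mul_assoc]
        _ = s (i + 1) * (prefixProd s i * s i * s (i + 1)) := by
            rw [hc.eq]; simp only [mul_assoc]

theorem exists_conj_eq_shift (hs : IsBraidSeq m s) (k : ℕ) :
    ∃ g : G, ∀ i, i + k + 1 < m → g * s i * g⁻¹ = s (i + k) := by
  have hone : ∀ i, i + 2 < m → prefixProd s (m - 1) * s i * (prefixProd s (m - 1))⁻¹ = s (i + 1) :=
    fun i hi => by rw [hs.prefixProd_mul (by omega) (by omega), mul_inv_cancel_right]
  induction k with
  | zero => exact ⟨1, by simp⟩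
  | succ k ih =>
    obtain ⟨g, hg⟩ := ih
    refine ⟨prefixProd s (m - 1) * g, fun i hi => ?_⟩
    rw [← add_assoc, ← hone (i + k) (by omega), ← hg i (by omega)]
    group

end Group

section Perm

variable {X : Type*} {m : ℕ} {s : ℕ → Perm X}

theorem exists_restrict (hs : IsBraidSeq m s) {p : X → Prop}
    (hp : ∀ i, i + 1 < m → ∀ x, p (s i x) ↔ p x) :
    ∃ t : ℕ → Perm {x // p x}, IsBraidSeq m t ∧
      ∀ i, i + 1 < m → ∀ x, (t i x : X) = s i x := by
  classical
  let t : ℕ → Perm {x // p x} := fun i =>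
    if hi : ∀ x, p (s i x) ↔ p x then (s i).subtypePerm hi else 1
  have ht : ∀ i, i + 1 < m → ∀ x, (t i x : X) = s i x := fun i hi x => by
    simp only [t, dif_pos (hp i hi), subtypePerm_apply]
  refine ⟨t, ⟨fun i j hij hj => ?_, fun i hi => ?_⟩, ht⟩
  · ext x
    simpa [ht i (by omega), ht j hj] using DFunLike.congr_fun (hs.commute hij hj).eq (x : X)
  · ext x
    simpa [ht i (by omega), ht (i + 1) hi] using DFunLike.congr_fun (hs.braid hi) (x : X)

end Perm

end IsBraidSeq

theorem pow_apply_ne_of_dvd {X : Type*} {g : Perm X} {d e : ℕ} (hde : d ∣ e) {x : X}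
    (hx : (g ^ e) x ≠ x) : (g ^ d) x ≠ x := by
  obtain ⟨k, rfl⟩ := hde
  intro h
  rw [pow_mul] at hx
  exact hx (pow_apply_eq_self_of_apply_eq_self h k)

theorem apply_ne_iff_of_commute {X : Type*} {a b : Perm X} (h : Commute a b) (x : X) :
    b (a x) ≠ a x ↔ b x ≠ x := by
  rw [← mul_apply, ← h.eq, mul_apply, a.injective.ne_iff]

section Cycles

variable {Y : Type*} [Fintype Y] {g : Perm Y}

theorem commute_of_toPermHom_eq_one [DecidableEq Y] (hg : ∀ y, g y ≠ y)
    {x y : Subgroup.centralizer {g}} (hx : OnCycleFactors.toPermHom g x = 1)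
    (hy : OnCycleFactors.toPermHom g y = 1) : Commute x y := by
  have : IsEmpty (Function.fixedPoints g) := ⟨fun y => hg y y.2⟩
  have hrange : ∀ z : Subgroup.centralizer {g}, OnCycleFactors.toPermHom g z = 1 →
      ∃ a, OnCycleFactors.kerParam g a = z := fun z hz => by
    change (z : Perm Y) ∈ (OnCycleFactors.kerParam g).range
    rw [OnCycleFactors.kerParam_range_eq]
    exact ⟨z, hz, rfl⟩
  obtain ⟨a, ha⟩ := hrange x hx
  obtain ⟨b, hb⟩ := hrange y hy
  have hab : Commute a b :=
    Prod.ext (Subsingleton.elim _ _) (funext fun c => mul_comm' (a.2 c) (b.2 c))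
  refine Subtype.ext ?_
  change (x * y : Perm Y) = y * x
  rw [← ha, ← hb, (hab.map (OnCycleFactors.kerParam g)).eq]

theorem card_cycleFactorsFinset_mul_le [DecidableEq Y] {r : ℕ}
    (hg : ∀ y, ∀ d, 0 < d → d < r → (g ^ d) y ≠ y) :
    g.cycleFactorsFinset.card * r ≤ Fintype.card Y := by
  have hle : ∀ l ∈ g.cycleType, r ≤ l := by
    intro l hl
    rw [cycleType_def, Multiset.mem_map] at hl
    obtain ⟨c, hc, rfl⟩ := hl
    change r ≤ c.support.card
    have hcyc := (mem_cycleFactorsFinset_iff.1 hc).1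
    obtain ⟨y, hy⟩ := hcyc.nonempty_support
    by_contra! hlt
    refine hg y _ (Finset.card_pos.2 ⟨y, hy⟩) hlt ?_
    have hcy := cycle_is_cycleOf hy hc
    rw [← cycleOf_pow_apply_self, ← hcy, ← hcyc.orderOf, pow_orderOf_eq_one, one_apply]
  have := Multiset.card_nsmul_le_sum hle
  rw [sum_cycleType, cycleType_def, Multiset.card_map, smul_eq_mul] at this
  exact this.trans (Finset.card_le_univ _)

theorem orderOf_dvd_two_of_card_le_two {Z : Type*} [Fintype Z] (hZ : Fintype.card Z ≤ 2)
    (a : Perm Z) : orderOf a ∣ 2 := by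
  classical
  refine orderOf_dvd_card.trans ?_
  rw [Fintype.card_perm]
  exact Nat.factorial_dvd_factorial hZ

theorem mul_eq_mul_sq_of_braid {G : Type*} [Group G] {a b : G} (hbr : a * b * a = b * a * b)
    (hc : Commute (a ^ 2) (a⁻¹ * b)) :
    a⁻¹ * b * a = a * (a⁻¹ * b) ^ 2 ∧ (a⁻¹ * b) ^ 3 = 1 := by
  obtain ⟨w, rfl⟩ : ∃ w, b = a * w := ⟨a⁻¹ * b, by group⟩
  rw [inv_mul_cancel_left] at hc ⊢
  have hwa : w * a = a * w ^ 2 := by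
    have h : a ^ 2 * (w * a) = a ^ 2 * (a * w ^ 2) := by
      calc a ^ 2 * (w * a) = a * (a * w) * a := by simp [pow_succ, mul_assoc]
        _ = a * (w * a ^ 2) * w := by rw [hbr]; simp [pow_succ, mul_assoc]
        _ = a ^ 2 * (a * w ^ 2) := by rw [← hc.eq]; simp [pow_succ, mul_assoc]
    exact mul_left_cancel h
  refine ⟨hwa, ?_⟩
  have h : a ^ 2 * w ^ 4 = a ^ 2 * w := by
    calc a ^ 2 * w ^ 4 = a * (a * w ^ 2) * w ^ 2 := by simp [pow_succ, mul_assoc]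
      _ = a * (w * a) * w ^ 2 := by rw [hwa]
      _ = a * w * (a * w ^ 2) := by simp only [mul_assoc]
      _ = a * w * (w * a) := by rw [hwa]
      _ = a * w ^ 2 * a := by simp [pow_succ, mul_assoc]
      _ = w * a ^ 2 := by rw [← hwa]; simp [pow_succ, mul_assoc]
      _ = a ^ 2 * w := hc.eq.symm
  have : w ^ 3 * w = 1 * w := by rw [← pow_succ, one_mul]; exact mul_left_cancel h
  exact mul_right_cancel this

theorem eq_one_of_pow_three_of_commute (hY : Fintype.card Y < 6) (hg : ∀ y, g y ≠ y)
    {a w : Perm Y} (hag : Commute a g) (hwg : Commute w g) (hw : w ^ 3 = 1)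
    (hwa : w * a = a * w ^ 2) : w = 1 := by
  classical
  by_contra hne
  have hord : orderOf w = 3 := orderOf_eq_prime hw hne
  have hcyc : w.IsCycle := isCycle_of_prime_order' (by rw [hord]; norm_num) (by omega)
  obtain ⟨y, hy⟩ : ∃ y, w y ≠ y := by
    by_contra! h
    exact hne (Equiv.ext h)
  have haw : a * w = w ^ 2 * a := by
    calc a * w = a * w ^ 2 * w ^ 2 := by rw [mul_assoc, ← pow_add, pow_succ w 3, hw, one_mul]
      _ = w ^ 2 * a := by rw [← hwa, mul_assoc, ← hwa, sq, mul_assoc]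
  have hay : w (a y) ≠ a y := by
    intro h
    have h' : a ((w ^ 2) y) = a y := by rw [← mul_apply, ← hwa, mul_apply, h]
    exact pow_apply_ne_of_dvd (e := 4) (d := 2) (by decide) (by rwa [pow_succ, hw, one_mul])
      (a.injective h')
  obtain ⟨k, hk⟩ := hcyc.exists_pow_eq hy ((apply_ne_iff_of_commute hwg.symm y).2 hy)
  obtain ⟨l, hl⟩ := hcyc.exists_pow_eq hy hay
  have hawk : a * w ^ k = (w ^ 2) ^ k * a := (SemiconjBy.pow_right haw k : SemiconjBy a _ _)
  have h : (w ^ k) ((w ^ k) ((w ^ l) y)) = (w ^ k) ((w ^ l) y) := by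
    calc (w ^ k) ((w ^ k) ((w ^ l) y)) = ((w ^ 2) ^ k * a) y := by
          rw [hl, ← pow_mul, two_mul, pow_add]; rfl
      _ = g (a y) := by
          rw [← hawk, mul_apply, hk, ← mul_apply, hag.eq, mul_apply]
      _ = (w ^ k) ((w ^ l) y) := by
          rw [← hl, ← mul_apply, ← (hwg.pow_left l).eq, mul_apply, ← hk, ← mul_apply, ← mul_apply,
            ← pow_add, ← pow_add, add_comm]
  rw [(w ^ k).injective.eq_iff, ← mul_apply, ← pow_add, add_comm, pow_add, mul_apply,
    (w ^ l).injective.eq_iff, hk] at h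
  exact hg y h

theorem eq_of_braid_of_card_lt_six (hY : Fintype.card Y < 6) (hg : ∀ y, g y ≠ y) {a b : Perm Y}
    (ha : Commute a g) (hb : Commute b g) (hbr : a * b * a = b * a * b) : a = b := by
  classical
  let f := OnCycleFactors.toPermHom g
  have hcard : Fintype.card g.cycleFactorsFinset ≤ 2 := by
    have := card_cycleFactorsFinset_mul_le (g := g) (r := 2) fun y d h0 h2 => by
      obtain rfl : d = 1 := by omega
      exact hg y
    rw [Fintype.card_coe]
    omega
  let A : Subgroup.centralizer {g} := ⟨a, Subgroup.mem_centralizer_singleton_iff.2 ha⟩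
  let B : Subgroup.centralizer {g} := ⟨b, Subgroup.mem_centralizer_singleton_iff.2 hb⟩
  have hAB : A * B * A = B * A * B := Subtype.ext hbr
  have hfAB : f A = f B :=
    eq_of_commute_of_braid (Commute.of_orderOf_dvd_two (orderOf_dvd_two_of_card_le_two hcard) _ _)
      (by simpa using congrArg f hAB)
  have hfsq : f (A ^ 2) = 1 := by
    rw [map_pow, ← orderOf_dvd_iff_pow_eq_one]
    exact orderOf_dvd_two_of_card_le_two hcard _
  have hfw : f (A⁻¹ * B) = 1 := by rw [map_mul, map_inv, hfAB, inv_mul_cancel]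
  obtain ⟨hwa, hw⟩ := mul_eq_mul_sq_of_braid hAB (commute_of_toPermHom_eq_one hg hfsq hfw)
  have := eq_one_of_pow_three_of_commute hY hg ha (w := a⁻¹ * b) (ha.inv_left.mul_left hb)
    (congrArg Subtype.val hw) (congrArg Subtype.val hwa)
  exact inv_mul_eq_one.1 this

end Cycles

/-- The conclusion of Artin's theorem for `k` strands: every homomorphism from the braid group to
a symmetric group on fewer than `k` letters sends all the Artin generators to one element. -/
def IsConstantInSmallDegree (k : ℕ) : Prop :=
  ∀ (X : Type u) [Fintype X] (s : ℕ → Perm X), IsBraidSeq k s → Fintype.card X < k →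
    ∀ i, i + 1 < k → s i = s 0

/-- On the points moved by the `e`-th power of the first generator, all generators far from the
first one agree. -/
def AgreesFar {X : Type*} (m e : ℕ) (s : ℕ → Perm X) : Prop :=
  ∀ i, 2 ≤ i → i + 1 < m → ∀ x, (s 0 ^ e) x ≠ x → s i x = s (m - 2) x

/-- The points moved by the `e`-th power of the `i`-th term of a sequence of permutations. -/
def powSupport {X : Type*} [Fintype X] [DecidableEq X] (s : ℕ → Perm X) (e i : ℕ) : Finset X :=
  (s i ^ e).support

theorem mem_powSupport {X : Type*} [Fintype X] [DecidableEq X] {s : ℕ → Perm X} {e i : ℕ} {x : X} :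
    x ∈ powSupport s e i ↔ (s i ^ e) x ≠ x :=
  mem_support

theorem pow_apply_eq_of_eqOn {X : Type*} {a b : Perm X} {U : Set X} (ha : Set.MapsTo a U U)
    (hab : Set.EqOn a b U) (k : ℕ) : Set.EqOn ⇑(a ^ k) ⇑(b ^ k) U := by
  induction k with
  | zero => exact fun _ _ => rfl
  | succ k ih =>
    intro x hx
    rw [pow_succ, pow_succ, mul_apply, mul_apply, ← hab hx, ih (ha hx)]

theorem card_biUnion_range_of_chain {X : Type*} [DecidableEq X] {C : ℕ → Finset X} {k N o : ℕ}
    (hN : ∀ i ≤ k, (C i).card = N) (ho : ∀ i < k, (C i ∩ C (i + 1)).card = o)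
    (hfar : ∀ i j, i + 2 ≤ j → j ≤ k → Disjoint (C i) (C j)) :
    ((Finset.range (k + 1)).biUnion C).card + k * o = (k + 1) * N := by
  induction k with
  | zero => simpa using hN 0 le_rfl
  | succ k ih =>
    have ih := ih (fun i hi => hN i (by omega)) (fun i hi => ho i (by omega))
      fun i j hij hj => hfar i j hij (by omega)
    have hinter : C (k + 1) ∩ (Finset.range (k + 1)).biUnion C = C k ∩ C (k + 1) := by
      ext x
      simp only [Finset.mem_inter, Finset.mem_biUnion, Finset.mem_range]
      refine ⟨fun ⟨hx, i, hi, hxi⟩ => ?_, fun ⟨hk, hx⟩ => ⟨hx, k, by omega, hk⟩⟩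
      obtain rfl : i = k := by
        by_contra hik
        exact Finset.disjoint_left.1 (hfar i (k + 1) (by omega) le_rfl) hxi hx
      exact ⟨hxi, hx⟩
    have hcard := Finset.card_union_add_card_inter (C (k + 1)) ((Finset.range (k + 1)).biUnion C)
    rw [hinter, ho k (by omega), hN (k + 1) le_rfl] at hcard
    rw [Finset.range_add_one, Finset.biUnion_insert]
    linarith

namespace IsBraidSeq

section Agreement

variable {X : Type u} {k e : ℕ} {g : Perm X} {t : ℕ → Perm X}

theorem const_of_commute_of_card_lt_mul [Fintype X] (ht : IsBraidSeq k t)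
    (hk : 5 ≤ k) (hA : IsConstantInSmallDegree.{u} k) (htg : ∀ i, i + 1 < k → Commute (t i) g)
    (he : 0 < e) (hg : ∀ x, ∀ d, 0 < d → d < e + 1 → (g ^ d) x ≠ x)
    (hX : Fintype.card X < (e + 1) * k) : ∀ i, i + 1 < k → t i = t 0 := by
  classical
  obtain ⟨t', ht', htt'⟩ := ht.exists_lift (K := Subgroup.centralizer {g})
    fun i hi => Subgroup.mem_centralizer_singleton_iff.2 (htg i hi)
  have hcard : Fintype.card g.cycleFactorsFinset < k := by
    have := card_cycleFactorsFinset_mul_le hg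
    rw [Fintype.card_coe]
    nlinarith
  have hconst := ht'.const_of_map_const hk (OnCycleFactors.toPermHom g)
    (fun _ _ => commute_of_toPermHom_eq_one fun x => hg x 1 one_pos (by omega))
    (hA _ _ (ht'.map _) hcard)
  intro i hi
  rw [← htt' i hi, ← htt' 0 (by omega), hconst i hi]

theorem const_of_commute_of_card_lt_six [Fintype X] (ht : IsBraidSeq k t)
    (htg : ∀ i, i + 1 < k → Commute (t i) g) (hg : ∀ x, g x ≠ x) (hX : Fintype.card X < 6) :
    ∀ i, i + 1 < k → t i = t 0 := by
  intro i hi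
  rcases i with _ | i
  · rfl
  · exact ht.const_of_zero_eq_one (eq_of_braid_of_card_lt_six hX hg (htg 0 (by omega))
      (htg 1 (by omega)) (ht.braid (by omega))) _ hi

end Agreement

section FarGenerators

variable {X : Type u} {m e : ℕ} {s : ℕ → Perm X}

theorem agreesFar_of_restrict (hs : IsBraidSeq m s) (he : e = 1 ∨ e = 2)
    (H : ∀ (t : ℕ → Perm {x // (s 0 ^ e) x ≠ x}) (g : Perm {x // (s 0 ^ e) x ≠ x}),
      IsBraidSeq (m - 2) t → (∀ i, i + 1 < m - 2 → Commute (t i) g) →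
      (∀ x, ∀ d, 0 < d → d < e + 1 → (g ^ d) x ≠ x) → ∀ i, i + 1 < m - 2 → t i = t 0) :
    AgreesFar m e s := by
  have hcomm : ∀ i, i + 1 < m - 2 → Commute (s (i + 2)) (s 0) := fun i hi =>
    (hs.commute (by omega) (by omega)).symm
  obtain ⟨t, ht, hts⟩ := (hs.shift 2).exists_restrict (p := fun x => (s 0 ^ e) x ≠ x)
    fun i hi => apply_ne_iff_of_commute ((hcomm i hi).pow_right e)
  let g : Perm {x // (s 0 ^ e) x ≠ x} :=
    (s 0).subtypePerm (apply_ne_iff_of_commute ((Commute.refl (s 0)).pow_right e))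
  have hconst := H t g ht (fun i hi => ?_) fun x d hd hde => ?_
  · have key : ∀ i, i + 1 < m - 2 → ∀ x, (s 0 ^ e) x ≠ x → s (i + 2) x = s 2 x := by
      intro i hi x hx
      rw [← hts i hi ⟨x, hx⟩, hconst i hi, hts 0 (by omega) ⟨x, hx⟩]
    intro i h2 hi x hx
    obtain ⟨i, rfl⟩ := Nat.exists_eq_add_of_le' h2
    obtain ⟨l, hl⟩ : ∃ l, m - 2 = l + 2 := ⟨m - 4, by omega⟩
    rw [hl, key i (by omega) x hx, key l (by omega) x hx]
  · ext x
    simpa [hts i hi, g] using DFunLike.congr_fun (hcomm i hi).eq (x : X)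
  · rw [ne_eq, Subtype.ext_iff, subtypePerm_pow, subtypePerm_apply]
    refine pow_apply_ne_of_dvd (e := e) ?_ x.2
    rcases he with rfl | rfl <;> interval_cases d <;> norm_num

theorem agreesFar_of_card_lt_mul [Fintype X] (hs : IsBraidSeq m s) (hm : 7 ≤ m)
    (hA : IsConstantInSmallDegree.{u} (m - 2)) (he : e = 1 ∨ e = 2)
    (hX : Fintype.card X < (e + 1) * (m - 2)) : AgreesFar m e s := by
  classical
  exact hs.agreesFar_of_restrict he fun t g ht htg hg =>
    ht.const_of_commute_of_card_lt_mul (by omega) hA htg (by omega) hg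
      ((Fintype.card_subtype_le _).trans_lt hX)

theorem agreesFar_of_card_lt_six [Fintype X] (hs : IsBraidSeq m s) (hX : Fintype.card X < 6) :
    AgreesFar m 1 s := by
  classical
  exact hs.agreesFar_of_restrict (Or.inl rfl) fun t g ht htg hg =>
    ht.const_of_commute_of_card_lt_six htg (fun x => hg x 1 one_pos (by omega))
      ((Fintype.card_subtype_le _).trans_lt hX)

theorem mapsTo_and_eq_of_agreesFar (hs : IsBraidSeq m s) (hm : 5 ≤ m) (h : AgreesFar m e s)
    (h' : AgreesFar m e fun i => s (m - 2 - i)) {Z : Set X}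
    (hZ : Z = {x | (s 0 ^ e) x ≠ x ∧ (s (m - 2) ^ e) x ≠ x}) :
    (∀ i, i + 1 < m → Set.MapsTo (s i) Z Z) ∧ Set.EqOn (s 0) (s 1) Z := by
  subst hZ
  have hlow : ∀ i, i + 3 < m → ∀ x, (s (m - 2) ^ e) x ≠ x → s i x = s 0 x := fun i hi x hx => by
    simpa [show m - 2 - (m - 2 - i) = i by omega] using
      h' (m - 2 - i) (by omega) (by omega) x (by simpa using hx)
  have hmove : ∀ i j, i + 2 ≤ j ∨ i = j → j + 1 < m → ∀ x,
      ((s i ^ e) (s j x) ≠ s j x ↔ (s i ^ e) x ≠ x) ∧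
        ((s j ^ e) (s i x) ≠ s i x ↔ (s j ^ e) x ≠ x) := fun i j hij hj x => by
    have hc : Commute (s i) (s j) := by
      rcases hij with hij | rfl
      exacts [hs.commute hij hj, Commute.refl _]
    exact ⟨apply_ne_iff_of_commute (hc.symm.pow_right e) x,
      apply_ne_iff_of_commute (hc.pow_right e) x⟩
  refine ⟨fun i hi x hx => ?_, fun x hx => (hlow 1 (by omega) x hx.2).symm⟩
  rcases Nat.lt_or_ge i 2 with h2 | h2
  · change (s 0 ^ e) (s i x) ≠ s i x ∧ (s (m - 2) ^ e) (s i x) ≠ s i x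
    rw [hlow i (by omega) x hx.2]
    exact ⟨(hmove 0 0 (.inr rfl) (by omega) x).1.2 hx.1,
      (hmove 0 (m - 2) (.inl (by omega)) (by omega) x).2.2 hx.2⟩
  · change (s 0 ^ e) (s i x) ≠ s i x ∧ (s (m - 2) ^ e) (s i x) ≠ s i x
    rw [h i h2 hi x hx.1]
    exact ⟨(hmove 0 (m - 2) (.inl (by omega)) (by omega) x).1.2 hx.1,
      (hmove (m - 2) (m - 2) (.inr rfl) (by omega) x).1.2 hx.2⟩

theorem disjoint_powSupport_of_agreesFar [Fintype X] [DecidableEq X] (hs : IsBraidSeq m s)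
    (h : AgreesFar m e s) (hZ : ∀ x, (s 0 ^ e) x ≠ x → (s (m - 2) ^ e) x = x) {i j : ℕ}
    (hij : i + 2 ≤ j) (hj : j + 1 < m) : Disjoint (powSupport s e i) (powSupport s e j) := by
  have hzero : ∀ j, 2 ≤ j → j + 1 < m → Disjoint (powSupport s e 0) (powSupport s e j) := by
    intro j h2 hj
    rw [Finset.disjoint_left]
    intro x hx hxj
    rw [mem_powSupport] at hx hxj
    have hmaps : Set.MapsTo (s j) {x | (s 0 ^ e) x ≠ x} {x | (s 0 ^ e) x ≠ x} := fun y hy =>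
      (apply_ne_iff_of_commute ((hs.commute (by omega) hj).symm.pow_right e) y).2 hy
    rw [pow_apply_eq_of_eqOn hmaps (h j h2 hj) e hx] at hxj
    exact hxj (hZ x hx)
  obtain ⟨g, hg⟩ := hs.exists_conj_eq_shift i
  have h₀ := hg 0 (by omega)
  have h₁ := hg (j - i) (by omega)
  rw [zero_add] at h₀
  rw [show j - i + i = j by omega] at h₁
  simp only [powSupport, ← h₀, ← h₁, conj_pow, support_conj, Finset.disjoint_map]
  exact hzero (j - i) (by omega) (by omega)

end FarGenerators

section Chain

variable {X : Type*} [Fintype X] [DecidableEq X] {m e : ℕ} {s : ℕ → Perm X}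

theorem card_powSupport (hs : IsBraidSeq m s) {i : ℕ} (hi : i + 1 < m) :
    (powSupport s e i).card = (powSupport s e 0).card := by
  obtain ⟨g, hg⟩ := hs.exists_conj_eq_shift i
  have h₀ := hg 0 (by omega)
  rw [zero_add] at h₀
  simp only [powSupport, ← h₀, conj_pow, support_conj, Finset.card_map]

theorem card_powSupport_inter (hs : IsBraidSeq m s) {i : ℕ} (hi : i + 2 < m) :
    (powSupport s e i ∩ powSupport s e (i + 1)).card =
      (powSupport s e 0 ∩ powSupport s e 1).card := by
  obtain ⟨g, hg⟩ := hs.exists_conj_eq_shift i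
  have h₀ := hg 0 (by omega)
  have h₁ := hg 1 (by omega)
  rw [zero_add] at h₀
  rw [add_comm 1 i] at h₁
  simp only [powSupport, ← h₀, ← h₁, conj_pow, support_conj, ← Finset.map_inter, Finset.card_map]

theorem two_mul_card_inter_le (hs : IsBraidSeq m s) (hm : 4 ≤ m)
    (hfar : ∀ i j, i + 2 ≤ j → j + 1 < m → Disjoint (powSupport s e i) (powSupport s e j)) :
    2 * (powSupport s e 0 ∩ powSupport s e 1).card ≤ (powSupport s e 0).card := by
  have hdisj : Disjoint (powSupport s e 0 ∩ powSupport s e 1)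
      (powSupport s e 1 ∩ powSupport s e 2) :=
    (hfar 0 2 le_rfl (by omega)).mono Finset.inter_subset_left Finset.inter_subset_right
  have hcard := Finset.card_union_of_disjoint hdisj
  rw [hs.card_powSupport_inter (i := 1) (by omega)] at hcard
  rw [two_mul, ← hcard, ← hs.card_powSupport (i := 1) (by omega)]
  exact Finset.card_le_card (Finset.union_subset Finset.inter_subset_right Finset.inter_subset_left)

theorem mul_card_powSupport_le (hs : IsBraidSeq m s) (hm : 2 ≤ m)
    (hfar : ∀ i j, i + 2 ≤ j → j + 1 < m → Disjoint (powSupport s e i) (powSupport s e j)) :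
    (m - 1) * (powSupport s e 0).card ≤
      Fintype.card X + (m - 2) * (powSupport s e 0 ∩ powSupport s e 1).card := by
  have hchain := card_biUnion_range_of_chain (C := powSupport s e) (k := m - 2)
    (fun i hi => hs.card_powSupport (by omega)) (fun i hi => hs.card_powSupport_inter (by omega))
    fun i j hij hj => hfar i j hij (by omega)
  rw [show m - 2 + 1 = m - 1 by omega] at hchain
  rw [← hchain]
  gcongr
  exact Finset.card_le_univ _

theorem card_support_le_two_mul_card_inter {a b : Perm X} (hbr : a * b * a = b * a * b) :
    a.support.card ≤ 2 * (a.support ∩ b.support).card := by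
  have hle : (a.support \ b.support).card ≤ (a.support ∩ b.support).card := by
    refine Finset.card_le_card_of_injOn a (fun x hx => ?_) a.injective.injOn
    simp only [Finset.coe_sdiff, Set.mem_sdiff, Finset.mem_coe, mem_support, not_not] at hx
    simp only [Finset.coe_inter, Set.mem_inter_iff, Finset.mem_coe, mem_support]
    refine ⟨a.injective.ne hx.1, fun h => hx.1 (a.injective ?_)⟩
    simpa [hx.2, h] using DFunLike.congr_fun hbr x
  have := Finset.card_sdiff_add_card_inter a.support b.support
  omega

theorem eq_one_of_disjoint_support (hs : IsBraidSeq m s) (hm : 4 ≤ m) (hX : Fintype.card X < m)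
    (hfar : ∀ i j, i + 2 ≤ j → j + 1 < m → Disjoint (powSupport s 1 i) (powSupport s 1 j)) :
    ∀ i, i + 1 < m → s i = 1 := by
  intro i hi
  rw [← card_support_eq_zero]
  have hN := hs.card_powSupport (e := 1) hi
  have h₁ := hs.two_mul_card_inter_le hm hfar
  have h₂ := hs.mul_card_powSupport_le (by omega) hfar
  have h₃ := card_support_le_two_mul_card_inter (hs.braid (i := 0) (by omega))
  simp only [powSupport, pow_one, zero_add] at hN h₁ h₂ h₃
  obtain ⟨l, rfl⟩ := Nat.exists_eq_add_of_le' hm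
  rw [hN]
  rw [show l + 4 - 1 = l + 3 by omega, show l + 4 - 2 = l + 2 by omega] at h₂
  rw [le_antisymm h₃ h₁] at h₂ ⊢
  by_contra hne
  nlinarith [Nat.pos_of_ne_zero (right_ne_zero_of_mul hne)]

end Chain

end IsBraidSeq

theorem isConstantInSmallDegree {m : ℕ} (hm : 5 ≤ m) : IsConstantInSmallDegree.{u} m := by
  classical
  induction m using Nat.strong_induction_on with
  | _ m ih =>
  have agree : ∀ (X : Type u) [Fintype X] (s : ℕ → Perm X), IsBraidSeq m s → Fintype.card X < m →
      AgreesFar m 1 s := by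
    intro X _ s hs hX
    rcases Nat.lt_or_ge m 7 with h7 | h7
    · exact hs.agreesFar_of_card_lt_six (by omega)
    · exact hs.agreesFar_of_card_lt_mul h7 (ih (m - 2) (by omega) (by omega)) (.inl rfl) (by omega)
  intro X _ s hs hX
  set Z := {x | (s 0 ^ 1) x ≠ x ∧ (s (m - 2) ^ 1) x ≠ x} with hZ
  obtain ⟨hmaps, h01⟩ := hs.mapsTo_and_eq_of_agreesFar hm (agree X s hs hX)
    (agree X _ hs.reverse hX) hZ
  have hmem : ∀ i, i + 1 < m → ∀ x, s i x ∈ Z ↔ x ∈ Z := fun i hi x =>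
    ⟨fun hx => by simpa using perm_symm_mapsTo_of_mapsTo (s i) (hmaps i hi) hx,
      fun hx => hmaps i hi hx⟩
  obtain ⟨t, ht, hts⟩ := hs.exists_restrict (p := (· ∈ Z)) hmem
  obtain ⟨t', ht', hts'⟩ := hs.exists_restrict (p := (· ∉ Z)) fun i hi x => not_congr (hmem i hi x)
  have hcard := (Fintype.card_subtype_le (· ∉ Z)).trans_lt hX
  have hone : ∀ i, i + 1 < m → t' i = 1 := by
    refine ht'.eq_one_of_disjoint_support (by omega) hcard fun i j =>
      ht'.disjoint_powSupport_of_agreesFar (agree _ _ ht' hcard) fun x hx => ?_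
    by_contra hx'
    simp only [pow_one, ne_eq, Subtype.ext_iff, hts' _ (show 0 + 1 < m by omega),
      hts' _ (show m - 2 + 1 < m by omega)] at hx hx'
    exact x.2 ⟨hx, hx'⟩
  intro i hi
  ext x
  by_cases hx : x ∈ Z
  · have h := ht.const_of_zero_eq_one (Equiv.ext fun x => Subtype.ext ?_) i hi
    · rw [← hts i hi ⟨x, hx⟩, ← hts 0 (by omega) ⟨x, hx⟩, h]
    · rw [hts 0 (by omega), hts 1 (by omega), h01 x.2]
  · rw [← hts' i hi ⟨x, hx⟩, ← hts' 0 (by omega) ⟨x, hx⟩, hone i hi, hone 0 (by omega)]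

/-- The terms `s i` with `i + 1 < m` generate a transitive group, in the form suited to finite sets:
no nonempty proper subset is stable under all of them. -/
def IsTransitiveSeq {X : Type*} (m : ℕ) (s : ℕ → Perm X) : Prop :=
  ∀ Z : Set X, Z.Nonempty → (∀ i, i + 1 < m → Set.MapsTo (s i) Z Z) → Z = Set.univ

/-- A map to the strands `0, …, n - 1` under which each `s i` induces the transposition of the
strands `i` and `i + 1`. -/
structure IsStrandMap {X : Type*} (n : ℕ) (s : ℕ → Perm X) (π : X → ℕ) : Prop where
  lt : ∀ x, π x < n
  apply : ∀ ⦃i⦄, i + 1 < n → ∀ x, π (s i x) = swap i (i + 1) (π x)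

section Transvection

variable {X : Type*} {n : ℕ} {s : ℕ → Perm X}

/-- Membership in a family of sets `M i` transforms under `s` as if `M i` were the set of points
lying over the strands `i` and `i + 1`. -/
structure IsStrandPairFamily (n : ℕ) (s : ℕ → Perm X) (M : ℕ → X → Prop) : Prop where
  disjoint : ∀ ⦃i j⦄, i + 2 ≤ j → j + 1 < n → ∀ ⦃x⦄, M i x → ¬M j x
  stable : ∀ ⦃i j⦄, i + 1 < n → j + 1 < n → i = j ∨ i + 2 ≤ j ∨ j + 2 ≤ i → ∀ x,
    M j (s i x) ↔ M j x
  xor : ∀ ⦃i j⦄, i + 1 < n → j + 1 < n → j = i + 1 ∨ i = j + 1 → ∀ x,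
    M j (s i x) ↔ Xor (M i x) (M j x)

theorem IsStrandPairFamily.exists_mem {M : ℕ → X → Prop} (hM : IsStrandPairFamily n s M)
    (htr : IsTransitiveSeq n s) (hn : 2 ≤ n) (hne : ∃ x, M 0 x) (x : X) :
    ∃ i, i + 1 < n ∧ M i x := by
  obtain ⟨x₀, hx₀⟩ := hne
  suffices {x | ∃ i, i + 1 < n ∧ M i x} = Set.univ from this.ge (Set.mem_univ x)
  refine htr _ ⟨x₀, 0, hn, hx₀⟩ fun j hj x ⟨i, hi, hx⟩ => ?_
  by_cases hadj : i = j + 1 ∨ j = i + 1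
  · by_cases hxj : M j x
    · exact ⟨j, hj, (hM.stable hj hj (.inl rfl) x).2 hxj⟩
    · exact ⟨i, hi, (hM.xor hj hi hadj x).2 (.inr ⟨hx, hxj⟩)⟩
  · exact ⟨i, hi, (hM.stable hj hi (by omega) x).2 hx⟩

theorem IsStrandPairFamily.eq_zero_or_add_two_eq {M : ℕ → X → Prop} (hM : IsStrandPairFamily n s M)
    {i : ℕ} {x : X} (hi : i + 1 < n) (hx : M i x) (huniq : ∀ j, j + 1 < n → M j x → j = i) :
    i = 0 ∨ i + 2 = n := by
  -- Otherwise `s i x` would lie in both `M (i - 1)` and `M (i + 1)`.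
  by_contra h
  have hmem : ∀ j, j + 1 < n → j = i + 1 ∨ i = j + 1 → M j (s i x) := fun j hj hij =>
    (hM.xor hi hj hij x).2 (.inl ⟨hx, fun hxj => by have := huniq j hj hxj; omega⟩)
  exact hM.disjoint (by omega) (by omega) (hmem (i - 1) (by omega) (by omega))
    (hmem (i + 1) (by omega) (by omega))

theorem IsStrandPairFamily.exists_strand {M : ℕ → X → Prop} (hM : IsStrandPairFamily n s M)
    (htr : IsTransitiveSeq n s) (hn : 2 ≤ n) (hne : ∃ x, M 0 x) (x : X) :
    ∃ k < n, ∀ i, i + 1 < n → (M i x ↔ k = i ∨ k = i + 1) := by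
  obtain ⟨i, hi, hx⟩ := hM.exists_mem htr hn hne x
  have hfar : ∀ j, j + 1 < n → M j x → j ≤ i + 1 ∧ i ≤ j + 1 := fun j hj hxj => by
    by_contra h
    rcases Nat.lt_or_ge i j with hij | hij
    · exact hM.disjoint (by omega) hj hx hxj
    · exact hM.disjoint (by omega) hi hxj hx
  by_cases hr : i + 2 < n ∧ M (i + 1) x
  · refine ⟨i + 1, by omega, fun j hj => ⟨fun hxj => ?_, ?_⟩⟩
    · have := hfar j hj hxj
      by_contra
      exact hM.disjoint (i := j) (j := i + 1) (by omega) hr.1 hxj hr.2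
    · rintro (rfl | h)
      exacts [hr.2, (Nat.succ_injective h) ▸ hx]
  by_cases hl : 0 < i ∧ M (i - 1) x
  · refine ⟨i, by omega, fun j hj => ⟨fun hxj => ?_, ?_⟩⟩
    · have := hfar j hj hxj
      by_contra
      obtain rfl : j = i + 1 := by omega
      exact hr ⟨hj, hxj⟩
    · rintro (rfl | rfl)
      exacts [hx, hl.2]
  have huniq : ∀ j, j + 1 < n → M j x → j = i := fun j hj hxj => by
    have := hfar j hj hxj
    by_contra
    obtain rfl | rfl : j = i + 1 ∨ i = j + 1 := by omega
    exacts [hr ⟨hj, hxj⟩, hl ⟨by omega, hxj⟩]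
  rcases hM.eq_zero_or_add_two_eq hi hx huniq with rfl | rfl
  · refine ⟨0, by omega, fun j hj => ⟨fun hxj => .inl (huniq j hj hxj).symm, ?_⟩⟩
    rintro (rfl | h)
    exacts [hx, absurd h (by omega)]
  · refine ⟨i + 1, by omega, fun j hj => ⟨fun hxj => .inr (by rw [huniq j hj hxj]), ?_⟩⟩
    rintro (rfl | h)
    exacts [absurd hj (by omega), Nat.succ_injective h ▸ hx]

theorem eq_of_forall_adjacent_iff {n a b : ℕ} (hn : 3 ≤ n) (ha : a < n) (hb : b < n)
    (h : ∀ i, i + 1 < n → ((a = i ∨ a = i + 1) ↔ (b = i ∨ b = i + 1))) : a = b := by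
  by_cases ha' : a + 1 < n <;> by_cases hb' : b + 1 < n
  · have := h a ha'
    have := h b hb'
    omega
  · have := h (b - 1) (by omega)
    have := h a ha'
    have := h (b - 2) (by omega)
    omega
  · have := h (a - 1) (by omega)
    have := h b hb'
    have := h (a - 2) (by omega)
    omega
  · omega

theorem IsStrandPairFamily.exists_isStrandMap {M : ℕ → X → Prop} (hM : IsStrandPairFamily n s M)
    (htr : IsTransitiveSeq n s) (hn : 3 ≤ n) (hne : ∃ x, M 0 x) :
    ∃ π, IsStrandMap n s π := by
  choose π hlt hπ using hM.exists_strand htr (by omega) hne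
  refine ⟨π, hlt, fun i hi x => eq_of_forall_adjacent_iff hn (hlt _) ?_ fun j hj => ?_⟩
  · have := hlt x
    rw [swap_apply_def]
    split_ifs <;> omega
  · have hi' := hπ x i hi
    have hj' := hπ x j hj
    rw [← hπ _ j hj, swap_apply_def]
    by_cases hadj : j = i + 1 ∨ i = j + 1
    · rw [hM.xor hi hj hadj, hi', hj', xor_def]
      split_ifs <;> omega
    · rw [hM.stable hi hj (by omega), hj']
      split_ifs <;> omega

end Transvection

theorem card_triple_of_sq_apply_ne {X : Type*} [DecidableEq X] {a : Perm X} {x : X}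
    (hx : (a ^ 2) x ≠ x) : ({x, a x, a (a x)} : Finset X).card = 3 := by
  have hx₁ : a x ≠ x := fun h => hx (pow_apply_eq_self_of_apply_eq_self h 2)
  refine Finset.card_eq_three.2 ⟨_, _, _, hx₁.symm, ?_, (a.injective.ne hx₁).symm, rfl⟩
  rwa [pow_two, mul_apply, ne_comm] at hx

theorem triple_subset_support_sq {X : Type*} [Fintype X] [DecidableEq X] {a : Perm X} {x : X}
    (hx : (a ^ 2) x ≠ x) : {x, a x, a (a x)} ⊆ (a ^ 2).support := by
  simp only [Finset.insert_subset_iff, Finset.singleton_subset_iff, mem_support,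
    apply_ne_iff_of_commute ((Commute.refl a).pow_right 2)]
  exact ⟨hx, hx, hx⟩

theorem apply_mem_support_pow_iff {X : Type*} [Fintype X] [DecidableEq X] {a b g : Perm X}
    (h : g * a = b * g) (e : ℕ) (x : X) : g x ∈ (b ^ e).support ↔ x ∈ (a ^ e).support := by
  have hpow : (b ^ e) (g x) = g ((a ^ e) x) :=
    DFunLike.congr_fun (SemiconjBy.pow_right (a := g) h e).eq.symm x
  rw [mem_support, mem_support, hpow, g.injective.ne_iff]

/-- The permutation `a` acts on membership in `support (b ^ 2)` as a transvection does: by adding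
membership in `support (a ^ 2)`. -/
def ActsByTransvection {X : Type*} [Fintype X] [DecidableEq X] (a b : Perm X) : Prop :=
  ∀ x, a x ∈ (b ^ 2).support ↔ Xor (x ∈ (a ^ 2).support) (x ∈ (b ^ 2).support)

theorem ActsByTransvection.of_conj {X : Type*} [Fintype X] [DecidableEq X] {a b a' b' g : Perm X}
    (h : ActsByTransvection a b) (ha : g * a * g⁻¹ = a') (hb : g * b * g⁻¹ = b') :
    ActsByTransvection a' b' := by
  rw [mul_inv_eq_iff_eq_mul] at ha hb
  intro x
  obtain ⟨x, rfl⟩ := g.surjective x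
  rw [← mul_apply, ← ha, mul_apply]
  simp only [apply_mem_support_pow_iff ha, apply_mem_support_pow_iff hb]
  exact h x

theorem ActsByTransvection.symm {X : Type*} [Fintype X] [DecidableEq X] {a b : Perm X}
    (h : ActsByTransvection a b) (hbr : a * b * a = b * a * b) : ActsByTransvection b a := by
  refine h.of_conj (g := a * b * a) (mul_inv_eq_of_eq_mul ?_) (mul_inv_eq_of_eq_mul ?_)
  · calc a * b * a * a = b * a * b * a := by rw [hbr]
      _ = b * (a * b * a) := by simp only [mul_assoc]
  · calc a * b * a * b = a * (b * a * b) := by simp only [mul_assoc]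
      _ = a * (a * b * a) := by rw [hbr]

namespace IsBraidSeq

section Transvection

variable {X : Type*} [Fintype X] [DecidableEq X] {n : ℕ} {s : ℕ → Perm X}

theorem apply_mem_powSupport_iff (hs : IsBraidSeq n s) {e i j : ℕ} (hi : i + 1 < n)
    (hj : j + 1 < n) (hij : i = j ∨ i + 2 ≤ j ∨ j + 2 ≤ i) (x : X) :
    s i x ∈ powSupport s e j ↔ x ∈ powSupport s e j := by
  rw [mem_powSupport, mem_powSupport]
  refine apply_ne_iff_of_commute (Commute.pow_right ?_ e) x
  rcases hij with rfl | h | h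
  exacts [.refl _, hs.commute h hj, (hs.commute h hi).symm]

theorem card_powSupport_two (hs : IsBraidSeq n s) (hn : 4 ≤ n)
    (hfar : ∀ i j, i + 2 ≤ j → j + 1 < n → Disjoint (powSupport s 2 i) (powSupport s 2 j))
    (hX : Fintype.card X = 2 * n) (hsq : s 0 ^ 2 ≠ 1) :
    (powSupport s 2 0).card = 3 ∧ (powSupport s 2 0 ∩ powSupport s 2 1).card = 1 ∨
      (powSupport s 2 0).card = 2 * (powSupport s 2 0 ∩ powSupport s 2 1).card := by
  have h₁ := hs.two_mul_card_inter_le hn hfar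
  have h₂ := hs.mul_card_powSupport_le (by omega) hfar
  have h₃ : 3 ≤ (powSupport s 2 0).card := by
    obtain ⟨x, hx⟩ := not_forall.1 fun h => hsq (Equiv.ext h)
    exact card_triple_of_sq_apply_ne hx ▸ Finset.card_le_card (triple_subset_support_sq hx)
  obtain ⟨k, rfl⟩ := Nat.exists_eq_add_of_le' hn
  rw [hX, show k + 4 - 1 = k + 3 by omega, show k + 4 - 2 = k + 2 by omega] at h₂
  generalize (powSupport s 2 0).card = N at *
  generalize (powSupport s 2 0 ∩ powSupport s 2 1).card = o at *
  have hN : N ≤ 4 := by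
    by_contra! hN
    nlinarith
  have ho : o ≤ 2 := by omega
  interval_cases N <;> interval_cases o <;> omega

theorem mem_left_or_right_of_card_eq (hs : IsBraidSeq n s)
    (hfar : ∀ i j, i + 2 ≤ j → j + 1 < n → Disjoint (powSupport s 2 i) (powSupport s 2 j))
    (hcard : (powSupport s 2 0).card = 2 * (powSupport s 2 0 ∩ powSupport s 2 1).card)
    {i : ℕ} (hi : i + 3 < n) {x : X} (hx : x ∈ powSupport s 2 (i + 1)) :
    x ∈ powSupport s 2 i ∨ x ∈ powSupport s 2 (i + 2) := by
  have hdisj : Disjoint (powSupport s 2 (i + 1) ∩ powSupport s 2 i)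
      (powSupport s 2 (i + 1) ∩ powSupport s 2 (i + 2)) :=
    (hfar i (i + 2) le_rfl (by omega)).mono Finset.inter_subset_right Finset.inter_subset_right
  have hunion : powSupport s 2 (i + 1) ∩ powSupport s 2 i ∪
      powSupport s 2 (i + 1) ∩ powSupport s 2 (i + 2) = powSupport s 2 (i + 1) :=
    Finset.eq_of_subset_of_card_le
      (Finset.union_subset Finset.inter_subset_left Finset.inter_subset_left) <| by
      rw [Finset.card_union_of_disjoint hdisj, Finset.inter_comm _ (powSupport s 2 i),
        hs.card_powSupport_inter (by omega), hs.card_powSupport_inter (i := i + 1) (by omega),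
        hs.card_powSupport (i := i + 1) (by omega), hcard, two_mul]
  rw [← hunion, Finset.mem_union, Finset.mem_inter, Finset.mem_inter] at hx
  exact hx.imp And.right And.right

theorem apply_mem_inter_iff (hs : IsBraidSeq n s)
    (hfar : ∀ i j, i + 2 ≤ j → j + 1 < n → Disjoint (powSupport s 2 i) (powSupport s 2 j))
    (hcard : (powSupport s 2 0).card = 3 ∧ (powSupport s 2 0 ∩ powSupport s 2 1).card = 1 ∨
      (powSupport s 2 0).card = 2 * (powSupport s 2 0 ∩ powSupport s 2 1).card)
    {i : ℕ} (hi : i + 4 < n) (x : X) :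
    s i x ∈ powSupport s 2 (i + 1) ∩ powSupport s 2 (i + 2) ↔
      x ∈ powSupport s 2 (i + 1) ∩ powSupport s 2 (i + 2) := by
  have hC := fun y => hs.apply_mem_powSupport_iff (e := 2) (i := i) (j := i + 2) (by omega)
    (by omega) (.inr (.inl le_rfl)) y
  have hC' := fun y => hs.apply_mem_powSupport_iff (e := 2) (i := i) (j := i + 3) (by omega)
    (by omega) (.inr (.inl (by omega))) y
  rcases hcard with ⟨hN, ho⟩ | hN
  · -- `s i` fixes the only point moved by the squares of both `s (i + 2)` and `s (i + 3)`, hence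
    -- its `s (i + 2)`-orbit.
    rw [← hs.card_powSupport_inter (i := i + 2) (by omega)] at ho
    obtain ⟨p, hp⟩ := Finset.card_eq_one.1 ho
    obtain ⟨hp₂, hp₃⟩ := Finset.mem_inter.1 (hp ▸ Finset.mem_singleton_self p)
    have hfix : s i p = p := by
      rw [← Finset.mem_singleton, ← hp, Finset.mem_inter, hC, hC']
      exact ⟨hp₂, hp₃⟩
    have hcomm : ∀ y, s i (s (i + 2) y) = s (i + 2) (s i y) :=
      DFunLike.congr_fun (hs.commute (i := i) le_rfl (by omega)).eq
    have htriple : {p, s (i + 2) p, s (i + 2) (s (i + 2) p)} = powSupport s 2 (i + 2) := by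
      rw [mem_powSupport] at hp₂
      exact Finset.eq_of_subset_of_card_le (triple_subset_support_sq hp₂)
        (by rw [hs.card_powSupport (by omega), hN, card_triple_of_sq_apply_ne hp₂])
    have hall : ∀ y ∈ powSupport s 2 (i + 2), s i y = y := by
      simp [← htriple, hcomm, hfix]
    by_cases hx : x ∈ powSupport s 2 (i + 2)
    · rw [hall x hx]
    · simp only [Finset.mem_inter, hC, hx, and_false]
  · have hiff : ∀ y, y ∈ powSupport s 2 (i + 1) ∩ powSupport s 2 (i + 2) ↔
        y ∈ powSupport s 2 (i + 2) ∧ y ∉ powSupport s 2 (i + 3) := fun y => by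
      have hdisj : y ∈ powSupport s 2 (i + 1) → y ∉ powSupport s 2 (i + 3) :=
        fun hy => Finset.disjoint_left.1 (hfar (i + 1) (i + 3) le_rfl (by omega)) hy
      have hcover := hs.mem_left_or_right_of_card_eq hfar hN (i := i + 1) (by omega) (x := y)
      rw [Finset.mem_inter]
      tauto
    rw [hiff, hiff, hC, hC']

theorem apply_mem_inter_of_mem_inter (hs : IsBraidSeq n s) (hn : 3 ≤ n)
    (hP : ∀ x, s 0 x ∈ powSupport s 2 1 ∩ powSupport s 2 2 ↔
      x ∈ powSupport s 2 1 ∩ powSupport s 2 2) {x : X}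
    (hx : x ∈ powSupport s 2 1 ∩ powSupport s 2 2) :
    s 1 x ∈ powSupport s 2 0 ∩ powSupport s 2 1 ∧
      (s 1).symm x ∈ powSupport s 2 0 ∩ powSupport s 2 1 := by
  have hbr : s 0 * s 1 * s 0 = s 1 * s 0 * s 1 := hs.braid hn
  have h₁₀ : ∀ y, s 0 (s 1 y) ∈ powSupport s 2 1 ↔ y ∈ powSupport s 2 0 :=
    apply_mem_support_pow_iff (hbr.trans (mul_assoc _ _ _)) 2
  have h₀₁ : ∀ y, s 1 (s 0 y) ∈ powSupport s 2 0 ↔ y ∈ powSupport s 2 1 :=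
    apply_mem_support_pow_iff (hbr.symm.trans (mul_assoc _ _ _)) 2
  have hself := fun y => hs.apply_mem_powSupport_iff (e := 2) (i := 1) (by omega) hn (.inl rfl) y
  have hx₁ := (Finset.mem_inter.1 hx).1
  simp only [Finset.mem_inter]
  constructor
  · obtain ⟨y, rfl⟩ := (s 0).surjective x
    exact ⟨(h₀₁ y).2 (Finset.mem_inter.1 ((hP y).1 hx)).1, (hself _).2 hx₁⟩
  · rw [← hself, ← h₁₀, apply_symm_apply]
    exact ⟨(Finset.mem_inter.1 ((hP x).2 hx)).1, hx₁⟩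

theorem actsByTransvection_one_two (hs : IsBraidSeq n s) (hn : 6 ≤ n)
    (hfar : ∀ i j, i + 2 ≤ j → j + 1 < n → Disjoint (powSupport s 2 i) (powSupport s 2 j))
    (hcard : (powSupport s 2 0).card = 3 ∧ (powSupport s 2 0 ∩ powSupport s 2 1).card = 1 ∨
      (powSupport s 2 0).card = 2 * (powSupport s 2 0 ∩ powSupport s 2 1).card) :
    ActsByTransvection (s 1) (s 2) := by
  have hback := fun x => hs.apply_mem_inter_of_mem_inter (by omega)
    (hs.apply_mem_inter_iff hfar hcard (i := 0) (by omega)) (x := x)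
  have hself := fun y => hs.apply_mem_powSupport_iff (e := 2) (i := 1) (j := 1) (by omega)
    (by omega) (.inl rfl) y
  have hP := hs.apply_mem_inter_iff hfar hcard (i := 1) (by omega)
  have hinter := hs.card_powSupport_inter (e := 2) (i := 1) (by omega)
  rcases hcard with ⟨-, ho⟩ | hN
  · -- Both `s 1` and its inverse move the point `q` to the point `p`.
    obtain ⟨p, hp⟩ := Finset.card_eq_one.1 ho
    obtain ⟨q, hq⟩ := Finset.card_eq_one.1 (hinter.trans ho)
    have hq' : q ∈ powSupport s 2 1 ∩ powSupport s 2 2 := hq ▸ Finset.mem_singleton_self q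
    obtain ⟨h₁, h₂⟩ := hback q hq'
    rw [hp, Finset.mem_singleton] at h₁ h₂
    refine absurd ?_ (mem_powSupport.1 (Finset.mem_inter.1 hq').1)
    rw [pow_two, mul_apply, h₁, ← h₂, apply_symm_apply]
  have hmap : (powSupport s 2 1 ∩ powSupport s 2 2).map (s 1).symm.toEmbedding =
      powSupport s 2 0 ∩ powSupport s 2 1 := by
    refine Finset.eq_of_subset_of_card_le (fun y hy => ?_) (by rw [Finset.card_map, hinter])
    obtain ⟨x, hx, rfl⟩ := Finset.mem_map.1 hy
    exact (hback x hx).2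
  have hforth : ∀ x ∈ powSupport s 2 0 ∩ powSupport s 2 1,
      s 1 x ∈ powSupport s 2 1 ∩ powSupport s 2 2 := fun x hx => by
    obtain ⟨y, hy, rfl⟩ := Finset.mem_map.1 (hmap.ge hx)
    simpa using hy
  intro x
  change s 1 x ∈ powSupport s 2 2 ↔ Xor (x ∈ powSupport s 2 1) (x ∈ powSupport s 2 2)
  have hdisj := Finset.disjoint_left.1 (hfar 0 2 le_rfl (by omega))
  have hcover₁ := hs.mem_left_or_right_of_card_eq hfar hN (i := 0) (by omega) (x := x)
  have hcover₂ := fun y =>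
    hs.mem_left_or_right_of_card_eq hfar hN (i := 1) (by omega) (x := y)
  simp only [Finset.mem_inter, Nat.reduceAdd, zero_add] at *
  grind

theorem isStrandPairFamily_powSupport (hs : IsBraidSeq n s) (hn : 6 ≤ n)
    (hfar : ∀ i j, i + 2 ≤ j → j + 1 < n → Disjoint (powSupport s 2 i) (powSupport s 2 j))
    (hX : Fintype.card X = 2 * n) (hsq : s 0 ^ 2 ≠ 1) :
    IsStrandPairFamily n s fun i x => x ∈ powSupport s 2 i where
  disjoint i j hij hj x := fun hx => Finset.disjoint_left.1 (hfar i j hij hj) hx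
  stable i j hi hj hij := hs.apply_mem_powSupport_iff hi hj hij
  xor i j hi hj hij := by
    have h₁₂ := hs.actsByTransvection_one_two hn hfar
      (hs.card_powSupport_two (by omega) hfar hX hsq)
    obtain ⟨g, hg⟩ := hs.exists_conj_eq_shift 1
    have h₀₁ : ActsByTransvection (s 0) (s 1) := by
      refine h₁₂.of_conj (g := g⁻¹) ?_ ?_
      · rw [← hg 0 (by omega)]; group
      · rw [← hg 1 (by omega)]; group
    have hadj : ∀ k, k + 2 < n → ActsByTransvection (s k) (s (k + 1)) := fun k hk => by
      obtain ⟨g, hg⟩ := hs.exists_conj_eq_shift k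
      have h₀ := hg 0 (by omega)
      have h₁ := hg 1 (by omega)
      rw [zero_add] at h₀
      rw [add_comm] at h₁
      exact h₀₁.of_conj h₀ h₁
    rcases hij with rfl | rfl
    · exact hadj i hj
    · exact (hadj j hi).symm (hs.braid hi)

end Transvection

theorem disjoint_powSupport_two {X : Type u} [Fintype X] [DecidableEq X] {n : ℕ} {s : ℕ → Perm X}
    (hs : IsBraidSeq n s) (hn : 7 ≤ n) (hX : Fintype.card X = 2 * n) (htr : IsTransitiveSeq n s)
    (hne : s 0 ≠ s 1) {i j : ℕ} (hij : i + 2 ≤ j) (hj : j + 1 < n) :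
    Disjoint (powSupport s 2 i) (powSupport s 2 j) := by
  have agree : ∀ t : ℕ → Perm X, IsBraidSeq n t → AgreesFar n 2 t := fun t ht =>
    ht.agreesFar_of_card_lt_mul hn (isConstantInSmallDegree (by omega)) (.inr rfl) (by omega)
  obtain ⟨hmaps, heq⟩ := hs.mapsTo_and_eq_of_agreesFar (by omega) (agree s hs)
    (agree _ hs.reverse) rfl
  refine hs.disjoint_powSupport_of_agreesFar (agree s hs) (fun x hx => ?_) hij hj
  by_contra hx'
  have huniv := htr {x | (s 0 ^ 2) x ≠ x ∧ (s (n - 2) ^ 2) x ≠ x} ⟨x, hx, hx'⟩ hmaps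
  exact hne (Equiv.ext fun y => heq (huniv.ge (Set.mem_univ y)))

theorem exists_isStrandMap_of_sq_ne_one {X : Type u} [Fintype X] {n : ℕ} {s : ℕ → Perm X}
    (hs : IsBraidSeq n s) (hn : 7 ≤ n) (hX : Fintype.card X = 2 * n) (htr : IsTransitiveSeq n s)
    (hne : s 0 ≠ s 1) (hsq : s 0 ^ 2 ≠ 1) : ∃ π, IsStrandMap n s π := by
  classical
  have hfar := fun i j => hs.disjoint_powSupport_two hn hX htr hne (i := i) (j := j)
  refine (hs.isStrandPairFamily_powSupport (by omega) hfar hX hsq).exists_isStrandMap htr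
    (by omega) ?_
  obtain ⟨x, hx⟩ := not_forall.1 fun h => hsq (Equiv.ext h)
  exact ⟨x, mem_powSupport.2 hx⟩

section Coxeter

variable {G : Type*} [Group G] {m : ℕ} {s : ℕ → G}

/-- The product `s j * ⋯ * s (m - 1)`. When the `s i` are involutions, `j = 0, …, m` gives coset
representatives for the subgroup generated by `s 0, …, s (m - 2)`. -/
def suffixProd (s : ℕ → G) (m j : ℕ) : G :=
  prefixProd (fun i => s (i + j)) (m - j)

theorem suffixProd_self (s : ℕ → G) (m : ℕ) : suffixProd s m m = 1 := by
  simp [suffixProd, prefixProd]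

theorem mul_suffixProd_succ (s : ℕ → G) {j : ℕ} (hj : j < m) :
    s j * suffixProd s m (j + 1) = suffixProd s m j := by
  obtain ⟨k, rfl⟩ : ∃ k, m = j + k + 1 := ⟨m - j - 1, by omega⟩
  rw [suffixProd, suffixProd, show j + k + 1 - (j + 1) = k by omega,
    show j + k + 1 - j = k + 1 by omega, prefixProd_succ_left]
  simp only [zero_add, add_assoc, add_comm j 1]

theorem mul_suffixProd_of_lt (hs : IsBraidSeq (m + 1) s) {i j : ℕ} (hi : i + 1 < j) :
    s i * suffixProd s m j = suffixProd s m j * s i := by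
  refine (commute_prefixProd fun l hl => ?_).eq.symm
  exact (hs.commute (i := i) (j := l + j) (by omega) (by omega)).symm

theorem mul_suffixProd_of_gt (hs : IsBraidSeq (m + 1) s) {i j : ℕ} (hij : j ≤ i)
    (hi : i + 1 < m) : s (i + 1) * suffixProd s m j = suffixProd s m j * s i := by
  have h := (hs.shift j).prefixProd_mul (k := m - j) (i := i - j) (by omega) (by omega)
  rw [show i - j + 1 + j = i + 1 by omega, show i - j + j = i by omega] at h
  exact h.symm

theorem exists_finset_card_le_factorial (hs : IsBraidSeq m s)
    (hsq : ∀ i, i + 1 < m → s i * s i = 1) :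
    ∃ A : Finset G, A.card ≤ m.factorial ∧ 1 ∈ A ∧ ∀ i, i + 1 < m → ∀ a ∈ A, s i * a ∈ A := by
  classical
  induction m with
  | zero => exact ⟨{1}, by simp, by simp, by omega⟩
  | succ m ih =>
    have hs' : IsBraidSeq m s := ⟨fun i j hij hj => hs.commute hij (by omega),
      fun i hi => hs.braid (by omega)⟩
    obtain ⟨A, hcard, hone, hA⟩ := ih hs' fun i hi => hsq i (by omega)
    let B := Finset.image₂ (fun j a => suffixProd s m j * a) (Finset.range (m + 1)) A
    have mem_B : ∀ {j a}, j ≤ m → a ∈ A → suffixProd s m j * a ∈ B := fun hj ha =>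
      Finset.mem_image₂_of_mem (Finset.mem_range.2 (by omega)) ha
    refine ⟨B, ?_, ?_, fun i hi x hx => ?_⟩
    · calc B.card ≤ (Finset.range (m + 1)).card * A.card := Finset.card_image₂_le _ _ _
        _ ≤ (m + 1).factorial := by
          rw [Finset.card_range, Nat.factorial_succ]
          exact Nat.mul_le_mul_left _ hcard
    · simpa [suffixProd_self] using mem_B le_rfl hone
    · obtain ⟨j, hj, a, ha, rfl⟩ := Finset.mem_image₂.1 hx
      have hj : j ≤ m := by simpa [Nat.lt_succ_iff] using hj
      rcases Nat.lt_trichotomy i j with hij | rfl | hij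
      · rcases Nat.eq_or_lt_of_le hij with rfl | hij
        · rw [← mul_assoc, mul_suffixProd_succ s (by omega)]
          exact mem_B (by omega) ha
        · rw [← mul_assoc, hs.mul_suffixProd_of_lt hij, mul_assoc]
          exact mem_B hj (hA i (by omega) a ha)
      · rw [← mul_suffixProd_succ s (j := i) (by omega), ← mul_assoc, ← mul_assoc, hsq i hi,
          one_mul]
        exact mem_B (by omega) ha
      · obtain ⟨i, rfl⟩ : ∃ l, i = l + 1 := ⟨i - 1, by omega⟩
        rw [← mul_assoc, hs.mul_suffixProd_of_gt (by omega) (by omega), mul_assoc]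
        exact mem_B hj (hA i (by omega) a ha)

theorem card_closure_le_factorial (hs : IsBraidSeq m s) (hsq : ∀ i, i + 1 < m → s i * s i = 1) :
    Finite (Subgroup.closure (s '' {i | i + 1 < m})) ∧
      Nat.card (Subgroup.closure (s '' {i | i + 1 < m})) ≤ m.factorial := by
  obtain ⟨A, hcard, hone, hA⟩ := hs.exists_finset_card_le_factorial hsq
  have hsub : (Subgroup.closure (s '' {i | i + 1 < m}) : Set G) ⊆ A := by
    intro g hg
    induction hg using Subgroup.closure_induction_left with
    | one => exact hone
    | mul_left x hx y _ hy => obtain ⟨i, hi, rfl⟩ := hx; exact hA i hi y hy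
    | inv_mul_cancel x hx y _ hy =>
      obtain ⟨i, hi, rfl⟩ := hx
      rw [inv_eq_of_mul_eq_one_left (hsq i hi)]
      exact hA i hi y hy
  refine ⟨(A.finite_toSet.subset hsub).to_subtype, le_trans ?_ hcard⟩
  rw [← Set.ncard_coe_finset]
  exact Set.ncard_le_ncard hsub A.finite_toSet

end Coxeter

end IsBraidSeq

/-- The transposition of `i` and `i + 1` in `Perm (Fin n)`; the identity if `n ≤ i + 1`. -/
def adjSwap (n i : ℕ) : Perm (Fin n) :=
  if h : i + 1 < n then swap ⟨i, by omega⟩ ⟨i + 1, h⟩ else 1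

theorem adjSwap_mul_self (n i : ℕ) : adjSwap n i * adjSwap n i = 1 := by
  rw [adjSwap]
  split_ifs <;> simp

theorem coe_adjSwap_apply {n i : ℕ} (hi : i + 1 < n) (k : Fin n) :
    (adjSwap n i k : ℕ) = swap i (i + 1) (k : ℕ) := by
  rw [adjSwap, dif_pos hi]
  simp only [swap_apply_def, Fin.ext_iff]
  split_ifs <;> rfl

theorem swap_braid {α : Type*} [DecidableEq α] {a b c : α} (hab : a ≠ b) (hbc : b ≠ c)
    (hac : a ≠ c) : swap a b * swap b c * swap a b = swap b c * swap a b * swap b c := by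
  rw [swap_mul_swap_mul_swap hab hac, swap_comm a b, swap_comm b c,
    swap_mul_swap_mul_swap hbc.symm hac.symm, swap_comm]

theorem isBraidSeq_adjSwap (n : ℕ) : IsBraidSeq n (adjSwap n) where
  commute i j hij hj := by
    rw [adjSwap, adjSwap, dif_pos (by omega), dif_pos hj]
    exact (disjoint_swap_swap (by simp; omega)).commute
  braid i hi := by
    rw [adjSwap, adjSwap, dif_pos (by omega), dif_pos hi]
    exact swap_braid (by simp) (by simp) (by simp; omega)

theorem closure_adjSwap (n : ℕ) : Subgroup.closure (adjSwap n '' {i | i + 1 < n}) = ⊤ := by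
  rcases n with _ | n
  · exact Subsingleton.elim _ _
  rw [eq_top_iff, ← Subgroup.toSubmonoid_le, Subgroup.top_toSubmonoid,
    ← mclosure_swap_castSucc_succ, Submonoid.closure_le]
  rintro _ ⟨i, rfl⟩
  refine Subgroup.subset_closure ⟨i, Nat.succ_lt_succ i.isLt, ?_⟩
  rw [adjSwap, dif_pos (Nat.succ_lt_succ i.isLt)]
  rfl

theorem IsBraidSeq.exists_hom_perm {G : Type*} [Group G] {n : ℕ} {s : ℕ → G}
    (hs : IsBraidSeq n s) (hsq : ∀ i, i + 1 < n → s i * s i = 1) :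
    ∃ φ : Perm (Fin n) →* G, ∀ i, i + 1 < n → φ (adjSwap n i) = s i := by
  let t : ℕ → G × Perm (Fin n) := fun i => (s i, adjSwap n i)
  have ht : IsBraidSeq n t :=
    ⟨fun i j hij hj => (hs.commute hij hj).prod ((isBraidSeq_adjSwap n).commute hij hj),
      fun i hi => Prod.ext (hs.braid hi) ((isBraidSeq_adjSwap n).braid hi)⟩
  set K := Subgroup.closure (t '' {i | i + 1 < n})
  have mem_K : ∀ i, i + 1 < n → t i ∈ K := fun i hi => Subgroup.subset_closure ⟨i, hi, rfl⟩
  obtain ⟨_, hcard⟩ := ht.card_closure_le_factorial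
    fun i hi => Prod.ext (hsq i hi) (adjSwap_mul_self n i)
  let pr : K →* Perm (Fin n) := (MonoidHom.snd G (Perm (Fin n))).comp K.subtype
  have hsurj : Function.Surjective pr := by
    rw [← MonoidHom.range_eq_top, eq_top_iff, ← closure_adjSwap n, Subgroup.closure_le]
    rintro _ ⟨i, hi, rfl⟩
    exact ⟨⟨t i, mem_K i hi⟩, rfl⟩
  have hbij : Function.Bijective pr := by
    refine (Nat.bijective_iff_surjective_and_card _).2
      ⟨hsurj, le_antisymm ?_ (Nat.card_le_card_of_surjective _ hsurj)⟩
    rwa [Nat.card_eq_fintype_card (α := Perm (Fin n)), Fintype.card_perm, Fintype.card_fin]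
  let e := MulEquiv.ofBijective pr hbij
  refine ⟨(MonoidHom.fst G (Perm (Fin n))).comp (K.subtype.comp e.symm.toMonoidHom), fun i hi => ?_⟩
  have he : e.symm (adjSwap n i) = ⟨t i, mem_K i hi⟩ := e.symm_apply_eq.2 rfl
  change ((e.symm (adjSwap n i) : K) : G × Perm (Fin n)).1 = s i
  rw [he]

section ThreeCycle

open scoped Pointwise

variable {α : Type*} [DecidableEq α] {H : Subgroup (Perm α)} {a b c x : α}

/-- The permutation `a ↦ b ↦ c ↦ a`, which is a 3-cycle if `a`, `b` and `c` are distinct. -/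
def threeCycle (a b c : α) : Perm α :=
  swap a b * swap b c

theorem threeCycle_apply_left (hab : a ≠ b) (hac : a ≠ c) : threeCycle a b c a = b := by
  simp [threeCycle, swap_apply_of_ne_of_ne hab hac]

theorem threeCycle_apply_mid (hbc : b ≠ c) (hac : a ≠ c) : threeCycle a b c b = c := by
  simp [threeCycle, swap_apply_of_ne_of_ne hac.symm hbc.symm]

theorem threeCycle_apply_right : threeCycle a b c c = a := by
  simp [threeCycle]

theorem threeCycle_apply_of_ne (ha : x ≠ a) (hb : x ≠ b) (hc : x ≠ c) :
    threeCycle a b c x = x := by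
  simp [threeCycle, swap_apply_of_ne_of_ne, ha, hb, hc]

theorem threeCycle_rotate (hab : a ≠ b) (hac : a ≠ c) : threeCycle b c a = threeCycle a b c := by
  have h := swap_apply_apply (swap b c) c a
  rw [swap_apply_right, swap_apply_of_ne_of_ne hab hac, swap_inv] at h
  rw [threeCycle, threeCycle, swap_comm a b, h, mul_assoc, swap_mul_self, mul_one]

theorem conj_threeCycle (g : Perm α) (a b c : α) :
    g * threeCycle a b c * g⁻¹ = threeCycle (g a) (g b) (g c) := by
  rw [threeCycle, threeCycle, swap_apply_apply, swap_apply_apply]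
  group

theorem commutator_eq_threeCycle {g h : Perm α} {p : α} (hg : g p ≠ p) (hh : h p ≠ p)
    (hd : ∀ x, x ≠ p → g x = x ∨ h x = x) : g * h * g⁻¹ * h⁻¹ = threeCycle p (g p) (h p) := by
  have hgh : g (h p) = h p := (hd _ hh).resolve_right fun e => hh (h.injective e)
  have hhg : h (g p) = g p := (hd _ hg).resolve_left fun e => hg (g.injective e)
  have hne : g p ≠ h p := fun e => hh (h.injective (by rw [← e, hhg]))
  rw [mul_inv_eq_iff_eq_mul, mul_inv_eq_iff_eq_mul]
  ext x
  simp only [mul_apply]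
  have hg_inj : ∀ y z, g y = g z → y = z := fun _ _ e => g.injective e
  have hh_inj : ∀ y z, h y = h z → y = z := fun _ _ e => h.injective e
  by_cases hx : x = p
  · rw [hx, hhg, hgh, threeCycle_apply_mid hne hh.symm]
  rcases hd x hx with hgx' | hhx'
  · rw [hgx']
    by_cases hhp : h x = p
    · rw [hhp, threeCycle_apply_left hg.symm hh.symm]
    · have hgx2 : g (h x) = h x := by grind
      rw [hgx2, threeCycle_apply_of_ne hhp (by grind) (by grind)]
  · rw [hhx']
    by_cases hgp : g x = p
    · rw [hgp, threeCycle_apply_right]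
    · have hhx2 : h (g x) = g x := by grind
      rw [hhx2, threeCycle_apply_of_ne hgp (by grind) (by grind)]

/-- The points `a`, `b`, `c` are distinct and `H` contains the 3-cycle `a ↦ b ↦ c ↦ a`. -/
structure ContainsThreeCycle (H : Subgroup (Perm α)) (a b c : α) : Prop where
  ne_left : a ≠ b
  ne_right : b ≠ c
  ne_outer : a ≠ c
  mem : threeCycle a b c ∈ H

namespace ContainsThreeCycle

theorem rotate (h : ContainsThreeCycle H a b c) : ContainsThreeCycle H b c a :=
  ⟨h.ne_right, h.ne_outer.symm, h.ne_left.symm, threeCycle_rotate h.ne_left h.ne_outer ▸ h.mem⟩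

theorem reverse (h : ContainsThreeCycle H a b c) : ContainsThreeCycle H c b a :=
  ⟨h.ne_right.symm, h.ne_left.symm, h.ne_outer.symm, by
    simpa [threeCycle, swap_comm] using H.inv_mem h.mem⟩

theorem swap_right (h : ContainsThreeCycle H a b c) : ContainsThreeCycle H a c b :=
  h.rotate.reverse

theorem swap_left (h : ContainsThreeCycle H a b c) : ContainsThreeCycle H b a c :=
  h.reverse.rotate

theorem conj (h : ContainsThreeCycle H a b c) (g : Perm α) :
    ContainsThreeCycle (MulAut.conj g • H) (g a) (g b) (g c) :=
  ⟨g.injective.ne h.ne_left, g.injective.ne h.ne_right, g.injective.ne h.ne_outer,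
    conj_threeCycle g a b c ▸ Subgroup.smul_mem_pointwise_smul _ (MulAut.conj g) H h.mem⟩

theorem conj_of_mem (h : ContainsThreeCycle H a b c) {g : Perm α} (hg : g ∈ H) :
    ContainsThreeCycle H (g a) (g b) (g c) :=
  Subgroup.conj_smul_eq_self_of_mem hg ▸ h.conj g

theorem of_common_witness (hab : ContainsThreeCycle H a b x) (hbc : ContainsThreeCycle H b c x)
    (hac : a ≠ c) : ContainsThreeCycle H a b c := by
  have h := hab.conj_of_mem hbc.mem
  rw [threeCycle_apply_of_ne hab.ne_left hac hab.ne_outer,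
    threeCycle_apply_left hbc.ne_left hbc.ne_outer, threeCycle_apply_right] at h
  exact h.swap_right

theorem of_witnesses {y : α} (hab : ContainsThreeCycle H a b x) (hbc : ContainsThreeCycle H b c y)
    (hac : a ≠ c) : ContainsThreeCycle H a b c := by
  by_cases hxc : x = c
  · exact hxc ▸ hab
  by_cases hya : y = a
  · exact (hya ▸ hbc).rotate.rotate
  by_cases hxy : x = y
  · exact hab.of_common_witness (hxy ▸ hbc) hac
  have h := hab.conj_of_mem hbc.mem
  rw [threeCycle_apply_of_ne hab.ne_left hac (Ne.symm hya),
    threeCycle_apply_left hbc.ne_left hbc.ne_outer,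
    threeCycle_apply_of_ne hab.ne_right.symm hxc hxy] at h
  exact (hab.swap_left.of_common_witness h hbc.ne_left).swap_left

end ContainsThreeCycle

theorem containsThreeCycle_of_mem_of_mem {g h : Perm α} {p : α} (hgH : g ∈ H) (hhH : h ∈ H)
    (hg : g p ≠ p) (hh : h p ≠ p) (hd : ∀ x, x ≠ p → g x = x ∨ h x = x) :
    ContainsThreeCycle H p (g p) (h p) := by
  have hhg : h (g p) = g p := (hd _ hg).resolve_left fun e => hg (g.injective e)
  refine ⟨hg.symm, fun e => hh (h.injective (by rw [← e, hhg])), hh.symm, ?_⟩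
  rw [← commutator_eq_threeCycle hg hh hd]
  exact H.mul_mem (H.mul_mem (H.mul_mem hgH hhH) (H.inv_mem hgH)) (H.inv_mem hhH)

/-- The relation of lying in a common 3-cycle of `H`. It is an equivalence relation because two
3-cycles that overlap generate the alternating group on their union. -/
def threeCycleSetoid (H : Subgroup (Perm α)) : Setoid α where
  r a b := a = b ∨ ∃ x, ContainsThreeCycle H a b x
  iseqv :=
    { refl a := .inl rfl
      symm := by
        rintro a b (rfl | ⟨x, h⟩)
        exacts [.inl rfl, .inr ⟨x, h.swap_left⟩]
      trans := by
        rintro a b c (rfl | ⟨x, hab⟩) (rfl | ⟨y, hbc⟩)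
        · exact .inl rfl
        · exact .inr ⟨y, hbc⟩
        · exact .inr ⟨x, hab⟩
        · by_cases hac : a = c
          exacts [.inl hac, .inr ⟨b, (hab.of_witnesses hbc hac).swap_right⟩] }

theorem ContainsThreeCycle.threeCycleSetoid (h : ContainsThreeCycle H a b c) :
    threeCycleSetoid H a b :=
  .inr ⟨c, h⟩

theorem containsThreeCycle_of_threeCycleSetoid (hab : threeCycleSetoid H a b)
    (hbc : threeCycleSetoid H b c) (hab' : a ≠ b) (hbc' : b ≠ c) (hac' : a ≠ c) :
    ContainsThreeCycle H a b c := by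
  obtain ⟨x, hx⟩ := hab.resolve_left hab'
  obtain ⟨y, hy⟩ := hbc.resolve_left hbc'
  exact hx.of_witnesses hy hac'

theorem threeCycleSetoid_conj_iff (g : Perm α) :
    threeCycleSetoid (MulAut.conj g • H) (g a) (g b) ↔ threeCycleSetoid H a b := by
  have key : ∀ {H : Subgroup (Perm α)} {a b : α} (g : Perm α), threeCycleSetoid H a b →
      threeCycleSetoid (MulAut.conj g • H) (g a) (g b) := by
    rintro H a b g (rfl | ⟨x, h⟩)
    exacts [.inl rfl, .inr ⟨g x, h.conj g⟩]
  refine ⟨fun h => ?_, key g⟩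
  have := key g⁻¹ h
  rw [map_inv, inv_smul_smul] at this
  simpa using this

theorem alternatingGroup_le_of_forall_threeCycleSetoid [Fintype α]
    (h : ∀ a b, threeCycleSetoid H a b) : alternatingGroup α ≤ H := by
  rw [← closure_three_cycles_eq_alternating, Subgroup.closure_le]
  intro g hg
  obtain ⟨a, ha⟩ : g.support.Nonempty := Finset.card_pos.1 (by rw [hg.card_support]; omega)
  have hnd := hg.nodup_iff_mem_support.2 ha
  rw [SetLike.mem_coe, hg.eq_swap_mul_swap_iff_mem_support.2 ha]
  exact (containsThreeCycle_of_threeCycleSetoid (h a (g a)) (h (g a) (g (g a))) (by grind)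
    (by grind) (by grind)).mem

end ThreeCycle

section SmallIndex

open scoped Pointwise

variable {α : Type*} {H : Subgroup (Perm α)}

/-- The only element of `H` supported on `Γ` is the identity. -/
def IsIndependentSet (H : Subgroup (Perm α)) (Γ : Finset α) : Prop :=
  ∀ g ∈ H, (∀ x ∉ Γ, g x = x) → g = 1

theorem IsIndependentSet.factorial_card_le_index [Finite α] {Γ : Finset α}
    (hΓ : IsIndependentSet H Γ) : Γ.card.factorial ≤ H.index := by
  classical
  have hinj : Function.Injective
      fun g : Perm {x // x ∈ Γ} => (ofSubtype g : Perm α ⧸ H) := by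
    intro g h hgh
    have hone := hΓ _ (QuotientGroup.eq.1 hgh) fun x hx => by
      rw [← map_inv, ← map_mul, ofSubtype_apply_of_not_mem _ hx]
    exact ofSubtype_injective (inv_mul_eq_one.1 hone)
  have hcard := Nat.card_le_card_of_injective _ hinj
  rwa [Nat.card_perm, Nat.card_eq_finsetCard] at hcard

theorem exists_perm_smul_eq_of_card_eq [Finite α] [DecidableEq α] {s t : Finset α}
    (h : s.card = t.card) : ∃ g : Perm α, g • s = t := by
  have := Fintype.ofFinite α
  let e := Finset.equivOfCardEq h
  refine ⟨e.extendSubtype, Finset.eq_of_subset_of_card_le ?_ (by rw [Finset.card_smul_finset, h])⟩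
  intro x hx
  obtain ⟨y, hy, rfl⟩ := Finset.mem_smul_finset.1 hx
  exact e.extendSubtype_mem y hy

variable [Fintype α] [DecidableEq α]

theorem IsIndependentSet.exists_containsThreeCycle {Γ : Finset α} (hΓ : IsIndependentSet H Γ)
    (hinsert : ∀ p ∉ Γ, ¬IsIndependentSet H (insert p Γ)) (hcompl : ¬IsIndependentSet H Γᶜ) :
    ∃ a b c, ContainsThreeCycle H a b c := by
  simp only [IsIndependentSet, not_forall] at hcompl
  obtain ⟨h, hhH, hh, hh1⟩ := hcompl
  replace hh : ∀ x ∈ Γ, h x = x := fun x hx => hh x (by simpa using hx)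
  obtain ⟨p, hp⟩ : ∃ p, h p ≠ p := by
    by_contra! hfix
    exact hh1 (Equiv.ext hfix)
  have hpΓ := hinsert p fun hpΓ => hp (hh p hpΓ)
  simp only [IsIndependentSet, not_forall, Finset.mem_insert, not_or] at hpΓ
  obtain ⟨g, hgH, hg, hg1⟩ := hpΓ
  have hgp : g p ≠ p := fun hgp => hg1 <| hΓ g hgH fun x hx => by
    by_cases hxp : x = p
    exacts [hxp ▸ hgp, hg x ⟨hxp, hx⟩]
  refine ⟨p, g p, h p, containsThreeCycle_of_mem_of_mem hgH hhH hgp hp fun x hx => ?_⟩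
  by_cases hxΓ : x ∈ Γ
  exacts [.inr (hh x hxΓ), .inl (hg x ⟨hx, hxΓ⟩)]

theorem four_mul_lt_factorial {k : ℕ} (hk : 4 ≤ k) : 4 * k < k.factorial := by
  induction k, hk using Nat.le_induction with
  | base => decide
  | succ k hk ih => rw [Nat.factorial_succ]; nlinarith

/-- This is Bochert's argument: a largest independent set has at most `card α / 2` elements. -/
theorem exists_containsThreeCycle_of_index_le (hα : 7 ≤ Fintype.card α)
    (hH : H.index ≤ 2 * Fintype.card α) : ∃ a b c, ContainsThreeCycle H a b c := by
  classical
  obtain ⟨Γ, hΓ, hmax⟩ := Finset.exists_max_image (Finset.univ.filter (IsIndependentSet H))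
    Finset.card ⟨∅, Finset.mem_filter.2
      ⟨Finset.mem_univ _, fun g _ h => Equiv.ext fun x => h x (Finset.notMem_empty x)⟩⟩
  simp only [Finset.mem_filter, Finset.mem_univ, true_and] at hΓ hmax
  have hsmall : 2 * Γ.card < Fintype.card α := by
    by_contra hlt
    have := four_mul_lt_factorial (k := Γ.card) (by omega)
    have := hΓ.factorial_card_le_index
    omega
  refine hΓ.exists_containsThreeCycle (fun p hp hind => ?_) fun hind => ?_
  · have := hmax _ hind
    rw [Finset.card_insert_of_notMem hp] at this
    omega
  · have := hmax _ hind
    rw [Finset.card_compl] at this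
    omega

/-- The class of `a` under `threeCycleSetoid H`. -/
noncomputable def threeCycleClass (H : Subgroup (Perm α)) (a : α) : Finset α := by
  classical exact Finset.univ.filter (threeCycleSetoid H a)

theorem mem_threeCycleClass {a b : α} : b ∈ threeCycleClass H a ↔ threeCycleSetoid H a b := by
  simp [threeCycleClass]

theorem threeCycleClass_eq {a b : α} (h : threeCycleSetoid H a b) :
    threeCycleClass H a = threeCycleClass H b := by
  ext c
  rw [mem_threeCycleClass, mem_threeCycleClass]
  exact ⟨Setoid.trans' _ (Setoid.symm' _ h), Setoid.trans' _ h⟩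

theorem smul_threeCycleClass (g : Perm α) (a : α) :
    g • threeCycleClass H a = threeCycleClass (MulAut.conj g • H) (g a) := by
  ext b
  rw [← Finset.inv_smul_mem_iff, mem_threeCycleClass, mem_threeCycleClass,
    ← threeCycleSetoid_conj_iff g, ← Perm.smul_def g (g⁻¹ • b), smul_inv_smul]

theorem smul_threeCycleClass_eq_of_inv_mul_mem {a p : α} {g h : Perm α} (hgh : g⁻¹ * h ∈ H)
    (hg : p ∈ g • threeCycleClass H a) (hh : p ∈ h • threeCycleClass H a) :
    g • threeCycleClass H a = h • threeCycleClass H a := by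
  rw [← Finset.inv_smul_mem_iff, mem_threeCycleClass] at hg hh
  have := smul_threeCycleClass (H := H) (g⁻¹ * h) (h⁻¹ • p)
  rw [Subgroup.conj_smul_eq_self_of_mem hgh, ← Perm.smul_def, mul_smul, mul_smul,
    smul_inv_smul, ← threeCycleClass_eq hg, ← threeCycleClass_eq hh, inv_smul_eq_iff] at this
  exact this.symm

/-- Distinct translates of the class that contain `a` come from distinct cosets of `H`. -/
theorem choose_card_threeCycleClass_le_index (a : α) :
    (Fintype.card α - 1).choose ((threeCycleClass H a).card - 1) ≤ H.index := by
  set K := threeCycleClass H a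
  have hK : 0 < K.card := Finset.card_pos.2 ⟨a, mem_threeCycleClass.2 (Setoid.refl' _ a)⟩
  let S := Finset.powersetCard (K.card - 1) (Finset.univ.erase a)
  have hS : ∀ U ∈ S, a ∉ U ∧ K.card = (insert a U).card := fun U hU => by
    obtain ⟨hU, hcard⟩ := Finset.mem_powersetCard.1 hU
    have haU : a ∉ U := fun h => Finset.notMem_erase a _ (hU h)
    exact ⟨haU, by rw [Finset.card_insert_of_notMem haU]; omega⟩
  choose! g hg using fun U hU => exists_perm_smul_eq_of_card_eq (hS U hU).2
  have hinj : Set.InjOn (fun U => (g U : Perm α ⧸ H)) S := fun U hU V hV hUV => by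
    have : insert a U = insert a V := by
      rw [← hg U hU, ← hg V hV]
      apply smul_threeCycleClass_eq_of_inv_mul_mem (QuotientGroup.eq.1 hUV) (p := a)
      · exact (hg U hU).symm ▸ Finset.mem_insert_self a U
      · exact (hg V hV).symm ▸ Finset.mem_insert_self a V
    rw [← Finset.erase_insert (hS U hU).1, this, Finset.erase_insert (hS V hV).1]
  calc (Fintype.card α - 1).choose (K.card - 1) = S.card := by
        rw [Finset.card_powersetCard, Finset.card_erase_of_mem (Finset.mem_univ a),
          Finset.card_univ]
    _ ≤ H.index := by
        rw [← Nat.card_eq_finsetCard, Subgroup.index]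
        exact Nat.card_le_card_of_injective _ hinj.injective

theorem choose_two_le_choose {N k : ℕ} (hk : 2 ≤ k) (hkN : k + 2 ≤ N) :
    N.choose 2 ≤ N.choose k := by
  induction N generalizing k with
  | zero => omega
  | succ N ih =>
    rcases Nat.eq_or_lt_of_le hk with rfl | hk
    · rfl
    rcases Nat.eq_or_lt_of_le hkN with hkN | hkN
    · rw [← hkN, Nat.choose_symm_add]
    obtain ⟨l, rfl⟩ : ∃ l, k = l + 1 := ⟨k - 1, by omega⟩
    have hN : N ≤ N.choose 2 := by
      rw [Nat.choose_two_right, Nat.le_div_iff_mul_le two_pos]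
      exact Nat.mul_le_mul_left _ (by omega)
    calc (N + 1).choose 2 = N + N.choose 2 := by rw [Nat.choose_succ_succ', Nat.choose_one_right]
      _ ≤ N.choose l + N.choose (l + 1) :=
        Nat.add_le_add (hN.trans (ih (by omega) (by omega))) (ih (by omega) (by omega))
      _ = (N + 1).choose (l + 1) := (Nat.choose_succ_succ' N l).symm

theorem two_mul_lt_choose_two {n : ℕ} (hn : 7 ≤ n) : 2 * n < (n - 1).choose 2 := by
  obtain ⟨m, rfl⟩ : ∃ m, n = m + 7 := ⟨n - 7, by omega⟩
  rw [Nat.choose_two_right, Nat.lt_iff_add_one_le, Nat.le_div_iff_mul_le two_pos,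
    show m + 7 - 1 = m + 6 by omega, show m + 6 - 1 = m + 5 by omega]
  nlinarith

theorem exists_threeCycleClass_eq_compl_singleton (hα : 7 ≤ Fintype.card α)
    (hH : H.index = 2 * Fintype.card α) : ∃ a p, threeCycleClass H a = {p}ᶜ := by
  obtain ⟨a, b, c, h⟩ := exists_containsThreeCycle_of_index_le hα hH.le
  have hthree : 3 ≤ (threeCycleClass H a).card := by
    rw [← Finset.card_eq_three.2 ⟨a, b, c, h.ne_left, h.ne_outer, h.ne_right, rfl⟩]
    refine Finset.card_le_card fun x hx => ?_
    simp only [Finset.mem_insert, Finset.mem_singleton] at hx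
    rw [mem_threeCycleClass]
    rcases hx with rfl | rfl | rfl
    exacts [Setoid.refl' _ _, h.threeCycleSetoid, h.swap_right.threeCycleSetoid]
  have hlarge : Fintype.card α ≤ (threeCycleClass H a).card + 1 := by
    by_contra hlt
    have := choose_card_threeCycleClass_le_index (H := H) a
    have := two_mul_lt_choose_two hα
    have := choose_two_le_choose (N := Fintype.card α - 1) (k := (threeCycleClass H a).card - 1)
      (by omega) (by omega)
    omega
  have huniv : threeCycleClass H a ≠ Finset.univ := fun huniv => by
    have : Nontrivial α := Fintype.one_lt_card_iff_nontrivial.1 (by omega)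
    have hmem : ∀ x, threeCycleSetoid H a x := fun x =>
      mem_threeCycleClass.1 (huniv ▸ Finset.mem_univ x)
    have hdvd := Subgroup.index_dvd_of_le <| alternatingGroup_le_of_forall_threeCycleSetoid
      fun x y => Setoid.trans' _ (Setoid.symm' _ (hmem x)) (hmem y)
    rw [alternatingGroup.index_eq_two, hH] at hdvd
    have := Nat.le_of_dvd two_pos hdvd
    omega
  have hlt := (Finset.card_lt_iff_ne_univ _).2 huniv
  obtain ⟨p, hp⟩ := Finset.card_eq_one.1
    (show (threeCycleClass H a)ᶜ.card = 1 by rw [Finset.card_compl]; omega)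
  exact ⟨a, p, by rw [← hp, compl_compl]⟩

theorem eq_of_threeCycleClass_eq_compl_singleton (hα : 3 ≤ Fintype.card α) {a b p q : α}
    (hp : threeCycleClass H a = {p}ᶜ) (hq : threeCycleClass H b = {q}ᶜ) : p = q := by
  obtain ⟨r, hr⟩ : ({p, q}ᶜ : Finset α).Nonempty := by
    rw [← Finset.card_pos, Finset.card_compl]
    have := Finset.card_le_two (a := p) (b := q)
    omega
  simp only [Finset.mem_compl, Finset.mem_insert, Finset.mem_singleton, not_or] at hr
  have har : threeCycleSetoid H a r := mem_threeCycleClass.1 (by simp [hp, hr.1])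
  have hbr : threeCycleSetoid H b r := mem_threeCycleClass.1 (by simp [hq, hr.2])
  have := (threeCycleClass_eq har).trans (threeCycleClass_eq hbr).symm
  rwa [hp, hq, compl_inj_iff, Finset.singleton_inj] at this

end SmallIndex

open scoped Pointwise in
theorem exists_map_smul_eq_apply {α X : Type*} [Fintype α] [MulAction (Perm α) X]
    [MulAction.IsPretransitive (Perm α) X] (hα : 7 ≤ Fintype.card α)
    (hX : Nat.card X = 2 * Fintype.card α) :
    ∃ π : X → α, ∀ (g : Perm α) (x : X), π (g • x) = g (π x) := by
  classical
  choose a π hπ using fun x : X => exists_threeCycleClass_eq_compl_singleton hα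
    ((MulAction.index_stabilizer_of_transitive (Perm α) x).trans hX)
  refine ⟨π, fun g x => ?_⟩
  have h := smul_threeCycleClass (H := MulAction.stabilizer (Perm α) x) g (a x)
  have hstab : MulAut.conj g • MulAction.stabilizer (Perm α) x =
      MulAction.stabilizer (Perm α) (g • x) :=
    (MulAction.stabilizer_smul_eq_stabilizer_map_conj g x).symm
  have hcompl : g • ({π x}ᶜ : Finset α) = {g (π x)}ᶜ := by
    ext y
    rw [Finset.mem_compl, Finset.mem_singleton, ← Finset.inv_smul_mem_iff, Finset.mem_compl,
      Finset.mem_singleton, inv_smul_eq_iff]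
    rfl
  rw [hstab, hπ x, hcompl] at h
  exact eq_of_threeCycleClass_eq_compl_singleton (by omega) (hπ (g • x)) h.symm

theorem IsBraidSeq.mul_self_eq_one {G : Type*} [Group G] {n : ℕ} {s : ℕ → G}
    (hs : IsBraidSeq n s) (h : s 0 * s 0 = 1) : ∀ i, i + 1 < n → s i * s i = 1 := by
  intro i hi
  obtain ⟨g, hg⟩ := hs.exists_conj_eq_shift i
  have hi' := hg 0 (by omega)
  rw [zero_add] at hi'
  rw [← hi', conj_mul, h, mul_one, mul_inv_cancel]

theorem IsBraidSeq.exists_isStrandMap_of_sq_eq_one {X : Type*} [Fintype X] {n : ℕ}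
    {s : ℕ → Perm X} (hs : IsBraidSeq n s) (hn : 7 ≤ n) (hX : Fintype.card X = 2 * n)
    (htr : IsTransitiveSeq n s) (hsq : s 0 ^ 2 = 1) : ∃ π, IsStrandMap n s π := by
  obtain ⟨φ, hφ⟩ := hs.exists_hom_perm (hs.mul_self_eq_one (by rwa [← sq]))
  let := MulAction.compHom X φ
  have hsmul : ∀ i, i + 1 < n → ∀ x : X, adjSwap n i • x = s i x := fun i hi x =>
    DFunLike.congr_fun (hφ i hi) x
  have : MulAction.IsPretransitive (Perm (Fin n)) X := by
    refine ⟨fun x y => ?_⟩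
    have hZ := htr (MulAction.orbit (Perm (Fin n)) x) (MulAction.nonempty_orbit x)
      fun i hi z hz => by
        rw [← hsmul i hi]
        exact MulAction.mem_orbit_of_mem_orbit _ hz
    exact hZ.ge (Set.mem_univ y)
  obtain ⟨π, hπ⟩ := exists_map_smul_eq_apply (α := Fin n) (X := X) (by simpa using hn)
    (by simpa using hX)
  refine ⟨fun x => π x, fun x => (π x).2, fun i hi x => ?_⟩
  rw [← hsmul i hi, hπ, coe_adjSwap_apply hi]

section DoubleFibres

variable {X : Type*} {n : ℕ} {s : ℕ → Perm X} {π : X → ℕ} {ι τ : X → X}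

theorem IsStrandMap.symm_apply (hπ : IsStrandMap n s π) {i : ℕ} (hi : i + 1 < n) (x : X) :
    π ((s i).symm x) = swap i (i + 1) (π x) := by
  rw [← swap_apply_eq_iff, ← hπ.apply hi, apply_symm_apply]

theorem IsStrandMap.card_fibre_eq [Fintype X] (hπ : IsStrandMap n s π)
    (hX : Fintype.card X = 2 * n) {k : ℕ} (hk : k < n) : {x | π x = k}.ncard = 2 := by
  have hconst : ∀ k, k < n → {x | π x = k}.ncard = {x | π x = 0}.ncard := by
    intro k hk
    induction k with
    | zero => rfl
    | succ k ih =>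
      rw [← ih (by omega), ← Set.ncard_image_of_injective {x | π x = k} (s k).injective]
      congr 1
      ext x
      rw [Equiv.image_eq_preimage_symm]
      simp [hπ.symm_apply hk, swap_apply_eq_iff]
  classical
  have hsum := Finset.card_eq_sum_card_fiberwise (f := π) (s := Finset.univ)
    (t := Finset.range n) fun x _ => Finset.mem_coe.2 (Finset.mem_range.2 (hπ.lt x))
  have hfib : ∀ k ∈ Finset.range n,
      (Finset.univ.filter (π · = k)).card = {x | π x = 0}.ncard := by
    intro k hk
    rw [← hconst k (Finset.mem_range.1 hk), ← Set.ncard_coe_finset]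
    simp
  rw [Finset.sum_congr rfl hfib, Finset.sum_const, Finset.card_range, Finset.card_univ, hX,
    smul_eq_mul, mul_comm] at hsum
  rw [hconst k hk, Nat.eq_of_mul_eq_mul_left (by omega) hsum]

/-- Every fibre of `π` has exactly two points, which `ι` exchanges. -/
structure IsFibreExchange (π : X → ℕ) (ι : X → X) : Prop where
  ne : ∀ x, ι x ≠ x
  eq_iff : ∀ x y, π y = π x ↔ y = x ∨ y = ι x

theorem IsStrandMap.exists_isFibreExchange [Fintype X] (hπ : IsStrandMap n s π)
    (hX : Fintype.card X = 2 * n) : ∃ ι, IsFibreExchange π ι := by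
  have key : ∀ x, ∃ y, y ≠ x ∧ ∀ z, π z = π x ↔ z = x ∨ z = y := by
    intro x
    obtain ⟨a, b, hab, h⟩ := Set.ncard_eq_two.1 (hπ.card_fibre_eq hX (hπ.lt x))
    have hz : ∀ z, π z = π x ↔ z = a ∨ z = b := fun z => Set.ext_iff.1 h z
    rcases (hz x).1 rfl with rfl | rfl
    · exact ⟨b, hab.symm, hz⟩
    · exact ⟨a, hab, fun z => (hz z).trans or_comm⟩
  choose ι hne hι using key
  exact ⟨ι, hne, hι⟩

namespace IsFibreExchange

theorem apply_eq (hι : IsFibreExchange π ι) (x : X) : π (ι x) = π x :=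
  (hι.eq_iff x _).2 (.inr rfl)

theorem involutive (hι : IsFibreExchange π ι) : Function.Involutive ι := fun x =>
  (((hι.eq_iff (ι x) x).1 (hι.apply_eq x).symm).resolve_left (hι.ne x).symm).symm

theorem comm_apply (hι : IsFibreExchange π ι) (hπ : IsStrandMap n s π) {i : ℕ} (hi : i + 1 < n)
    (x : X) : ι (s i x) = s i (ι x) := by
  have h : π (s i (ι x)) = π (s i x) := by rw [hπ.apply hi, hπ.apply hi, hι.apply_eq]
  exact (((hι.eq_iff _ _).1 h).resolve_left fun h' => hι.ne x ((s i).injective h')).symm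

theorem exists_eq_cond (hι : IsFibreExchange π ι) {f : X → X} (hf : ∀ x, ι (f x) = f (ι x))
    {k : ℕ} (hk : ∀ x, π x = k → π (f x) = k) :
    ∃ a : Bool, ∀ x, π x = k → f x = cond a (ι x) x := by
  by_cases h : ∀ x, π x = k → f x = x
  · exact ⟨false, h⟩
  push Not at h
  obtain ⟨x, hx, hne⟩ := h
  have hfx : f x = ι x := ((hι.eq_iff x _).1 ((hk x hx).trans hx.symm)).resolve_left hne
  refine ⟨true, fun y hy => ?_⟩
  rcases (hι.eq_iff x y).1 (hy.trans hx.symm) with rfl | rfl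
  · exact hfx
  · rw [← hf, hfx]
    rfl

end IsFibreExchange

theorem IsStrandMap.apply_eq_of_ne (hπ : IsStrandMap n s π) (hs : IsBraidSeq n s)
    (hτ : ∀ i, i + 1 < n → ∀ x, τ (s i x) = s i (τ x)) (h : ∀ x, π x = 2 → s 0 x = τ x) :
    ∀ i, i + 1 < n → ∀ x, π x ≠ i → π x ≠ i + 1 → s i x = τ x := by
  have hzero : ∀ k, ∀ x, π x = k + 2 → s 0 x = τ x := by
    intro k
    induction k with
    | zero => exact h
    | succ k ih =>
      intro x hx
      have hk : k + 2 + 1 < n := by have := hπ.lt x; omega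
      obtain ⟨y, rfl⟩ := (s (k + 2)).surjective x
      rw [hπ.apply hk, swap_apply_eq_iff] at hx
      have hy := ih y (by simpa [add_right_comm] using hx)
      have hcomm := congr($((hs.commute (i := 0) (by omega) hk).eq) y)
      rw [hτ _ hk, ← hy]
      exact hcomm
  intro i
  induction i with
  | zero => exact fun _ x h₀ h₁ => hzero (π x - 2) x (by omega)
  | succ i ih =>
    intro hi x h₁ h₂
    -- Conjugation by `s i * s (i + 1)` takes `s i` to `s (i + 1)`.
    obtain ⟨y, rfl⟩ := (s i * s (i + 1)).surjective x
    rw [mul_apply, hπ.apply (by omega), hπ.apply hi] at h₁ h₂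
    have hy : s i y = τ y := by
      refine ih (by omega) y (fun hy => h₁ ?_) (fun hy => h₂ ?_)
      · rw [hy, swap_apply_of_ne_of_ne (x := i) (by omega) (by omega), swap_apply_left]
      · rw [hy, swap_apply_left, swap_apply_of_ne_of_ne (by omega) (by omega)]
    have hbraid := congr($(hs.braid hi) y)
    simp only [mul_apply] at hbraid ⊢
    rw [← hbraid, hy, hτ _ (by omega), hτ _ hi]

theorem IsStrandMap.apply_apply_eq (hπ : IsStrandMap n s π) (hs : IsBraidSeq n s)
    (hτ : ∀ i, i + 1 < n → ∀ x, τ (s i x) = s i (τ x)) (h : ∀ x, π x = 0 → s 0 (s 0 x) = τ x) :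
    ∀ i, i + 1 < n → ∀ x, π x = i → s i (s i x) = τ x := by
  intro i
  induction i with
  | zero => exact fun _ => h
  | succ i ih =>
    intro hi x hx
    obtain ⟨y, rfl⟩ := (s i * s (i + 1)).surjective x
    rw [mul_apply, hπ.apply (by omega), swap_apply_eq_iff, swap_apply_right, hπ.apply hi,
      swap_apply_eq_iff, swap_apply_of_ne_of_ne (by omega) (by omega)] at hx
    have hy := ih (by omega) y hx
    have hbraid : ∀ z, s i (s (i + 1) (s i z)) = s (i + 1) (s i (s (i + 1) z)) := fun z =>
      congr($(hs.braid hi) z)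
    rw [mul_apply, ← hbraid, ← hbraid, hy, hτ _ (by omega), hτ _ hi]

end DoubleFibres

section Labelling

variable {X : Type*} {n : ℕ} {a b : Bool}

/-- A labelling of a set by `n` strands and two sheets in which each `s i` follows the pattern
common to the Lin homomorphisms; `a` records whether the strands other than `i` and `i + 1` change
sheets and `b` whether the strand `i + 1` does. -/
def IsLinLabelling (a b : Bool) (s : Fin (n - 1) → Perm X) (e : Fin n × Bool ≃ X) : Prop :=
  ∀ (i : ℕ) (hi : i + 1 < n) (k : Fin n) (ε : Bool), s ⟨i, by omega⟩ (e (k, ε)) =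
    if (k : ℕ) = i then e (⟨i + 1, hi⟩, !ε)
    else if (k : ℕ) = i + 1 then e (⟨i, by omega⟩, xor b ε) else e (k, xor a ε)

theorem IsLinLabelling.exists_conj {s t : Fin (n - 1) → Perm X}
    {e f : Fin n × Bool ≃ X} (he : IsLinLabelling a b s e) (hf : IsLinLabelling a b t f) :
    ∃ u : Perm X, ∀ i, s i = u * t i * u⁻¹ := by
  refine ⟨f.symm.trans e, fun i => ?_⟩
  rw [eq_mul_inv_iff_mul_eq]
  refine Equiv.ext fun x => ?_
  obtain ⟨⟨k, ε⟩, rfl⟩ := f.surjective x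
  have hk := he i (by omega) k ε
  have hk' := hf i (by omega) k ε
  simp only [Fin.eta] at hk hk'
  simp only [mul_apply, Equiv.trans_apply, symm_apply_apply, hk, hk']
  split_ifs <;> simp only [symm_apply_apply]

variable {s : ℕ → Perm X} {π : X → ℕ} {ι : X → X}

/-- The labelling obtained by spreading the fibre `{x₀, ι x₀}` over all strands, changing sheets at
each step. -/
def strandLabel (s : ℕ → Perm X) (ι : X → X) (x₀ : X) : ℕ → Bool → X
  | 0, ε => cond ε (ι x₀) x₀
  | k + 1, ε => s k (strandLabel s ι x₀ k !ε)

theorem apply_strandLabel {x₀ : X} (hπ : IsStrandMap n s π) (hι : IsFibreExchange π ι)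
    (hx₀ : π x₀ = 0) {k : ℕ} (hk : k < n) (ε : Bool) : π (strandLabel s ι x₀ k ε) = k := by
  induction k generalizing ε with
  | zero => cases ε <;> simp [strandLabel, hι.apply_eq, hx₀]
  | succ k ih => rw [strandLabel, hπ.apply hk, ih (by omega), swap_apply_left]

theorem cond_strandLabel {x₀ : X} (hπ : IsStrandMap n s π) (hι : IsFibreExchange π ι)
    {k : ℕ} (hk : k < n) (a ε : Bool) :
    cond a (ι (strandLabel s ι x₀ k ε)) (strandLabel s ι x₀ k ε) =
      strandLabel s ι x₀ k (xor a ε) := by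
  induction k generalizing ε with
  | zero => cases a <;> cases ε <;> simp [strandLabel, hι.involutive x₀]
  | succ k ih =>
    have := ih (by omega) !ε
    cases a
    · simp
    · simpa [strandLabel, hι.comm_apply hπ hk] using this

theorem strandLabel_bijective [Fintype X] (hX : Fintype.card X = 2 * n) {x₀ : X}
    (hπ : IsStrandMap n s π) (hι : IsFibreExchange π ι) (hx₀ : π x₀ = 0) :
    Function.Bijective fun p : Fin n × Bool => strandLabel s ι x₀ p.1 p.2 := by
  refine (Fintype.bijective_iff_injective_and_card _).2 ⟨?_, by simp [hX, mul_comm]⟩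
  rintro ⟨k, ε⟩ ⟨l, δ⟩ h
  obtain rfl : k = l := Fin.ext <| by
    simpa [apply_strandLabel hπ hι hx₀] using congr(π $h)
  refine Prod.ext rfl ?_
  by_contra hne
  have := cond_strandLabel (x₀ := x₀) hπ hι k.2 true ε
  rw [cond_true, Bool.true_xor, ← Bool.eq_not.2 (Ne.symm hne)] at this
  exact hι.ne _ (this.trans h.symm)

theorem IsStrandMap.exists_isLinLabelling [Fintype X] (hX : Fintype.card X = 2 * n)
    (hπ : IsStrandMap n s π) (hs : IsBraidSeq n s) (hn : 3 ≤ n) :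
    ∃ a b e, IsLinLabelling (n := n) a b (fun i => s i) e := by
  obtain ⟨ι, hι⟩ := hπ.exists_isFibreExchange hX
  have hcomm : ∀ i, i + 1 < n → ∀ x, ι (s i x) = s i (ι x) := fun i hi => hι.comm_apply hπ hi
  have hcond : ∀ (c : Bool) (i : ℕ), i + 1 < n → ∀ x,
      cond c (ι (s i x)) (s i x) = s i (cond c (ι x) x) := by
    intro c i hi x
    cases c
    exacts [rfl, hcomm i hi x]
  obtain ⟨a, ha⟩ := hι.exists_eq_cond (hcomm 0 (by omega)) (k := 2) fun x hx => by
    rw [hπ.apply (by omega), hx, swap_apply_of_ne_of_ne (by omega) (by omega)]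
  obtain ⟨c, hc⟩ := hι.exists_eq_cond (f := fun x => s 0 (s 0 x)) (k := 0)
    (fun x => by rw [hcomm 0 (by omega), hcomm 0 (by omega)]) fun x hx => by
      rw [hπ.apply (by omega), hπ.apply (by omega), hx, swap_apply_left, swap_apply_right]
  have hfar := hπ.apply_eq_of_ne hs (hcond a) ha
  have hsq := hπ.apply_apply_eq hs (hcond c) hc
  obtain ⟨x₀, hx₀⟩ : {x | π x = 0}.Nonempty :=
    Set.nonempty_of_ncard_ne_zero (by rw [hπ.card_fibre_eq hX (by omega)]; omega)
  refine ⟨a, !c, Equiv.ofBijective _ (strandLabel_bijective hX hπ hι hx₀), fun i hi k ε => ?_⟩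
  simp only [Equiv.ofBijective_apply]
  have hlab : ∀ {j}, j < n → ∀ ε, π (strandLabel s ι x₀ j ε) = j := fun hj =>
    apply_strandLabel hπ hι hx₀ hj
  split_ifs with h₁ h₂
  · rw [h₁, strandLabel, Bool.not_not]
  · rw [h₂, strandLabel, hsq i hi _ (hlab (by omega) _), cond_strandLabel hπ hι (by omega)]
    cases c <;> simp
  · rw [hfar i hi _ (by rwa [hlab k.2]) (by rwa [hlab k.2]), cond_strandLabel hπ hι k.2]

/-- The points whose sheet is the parity of their strand form a stable set. -/
theorem not_isLinLabelling_false_true [NeZero n] {e : Fin n × Bool ≃ X}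
    (htr : IsTransitiveSeq n s) : ¬IsLinLabelling false true (fun i => s i) e := by
  intro he
  let Z : Set X := {x | (e.symm x).2 = Nat.bodd (e.symm x).1}
  have hZ : Z = Set.univ := htr Z ⟨e (0, false), by simp [Z]⟩ fun i hi x hx => by
    obtain ⟨⟨k, ε⟩, rfl⟩ := e.surjective x
    have hx' : ε = Nat.bodd k := by simpa [Z] using hx
    have := he i hi k ε
    simp only at this
    rw [this]
    split_ifs with h₁ h₂
    · simp [Z, hx', h₁]
    · simp [Z, hx', h₂]
    · simpa [Z] using hx'
  simpa [Z] using hZ.ge (Set.mem_univ (e (0, true)))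

end Labelling

section LinHomomorphisms

variable {n : ℕ}

/-- The point `j` of `Sym_{2n}` for the sheet `false`, and `n + j` for the sheet `true`. -/
def linPoint (n : ℕ) : Fin n × Bool ≃ Fin (2 * n) :=
  (Equiv.prodComm _ _).trans ((finTwoEquiv.symm.prodCongr (Equiv.refl _)).trans finProdFinEquiv)

theorem coe_linPoint_true (k : Fin n) : (linPoint n (k, true) : ℕ) = n + k := by
  simp [linPoint, finTwoEquiv, add_comm]

theorem tw_linPoint (j k : Fin n) (ε : Bool) :
    tw n j (linPoint n (k, ε)) = linPoint n (k, if k = j then !ε else ε) := by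
  have htw : tw n j = swap (linPoint n (j, false)) (linPoint n (j, true)) := by
    rw [tw]
    congr 1
    simp [Fin.ext_iff, coe_linPoint_true]
  simp only [htw, swap_apply_def, EmbeddingLike.apply_eq_iff_eq, Prod.mk.injEq]
  by_cases h : k = j <;> cases ε <;> simp [h]

theorem prod_tw_linPoint (P : Fin n → Prop) [DecidablePred P] {l : List (Fin n)} (hl : l.Nodup)
    (k : Fin n) (ε : Bool) :
    (l.map fun j => if P j then tw n j else 1).prod (linPoint n (k, ε)) =
      linPoint n (k, if k ∈ l ∧ P k then !ε else ε) := by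
  induction l with
  | nil => simp
  | cons j l ih =>
    rw [List.nodup_cons] at hl
    rw [List.map_cons, List.prod_cons, mul_apply, ih hl.2]
    by_cases hkj : k = j
    · subst hkj
      by_cases hP : P k <;> simp [hl.1, hP, tw_linPoint]
    · by_cases hP : P j <;> simp [hkj, hP, tw_linPoint]

theorem lowTw_linPoint (i : Fin (n - 1)) (k : Fin n) (ε : Bool) :
    lowTw n i (linPoint n (k, ε)) = linPoint n (k, if (k : ℕ) < i then !ε else ε) := by
  rw [lowTw, prod_tw_linPoint (fun j => (j : ℕ) < i) (List.nodup_finRange n)]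
  simp

theorem highTw_linPoint (i : Fin (n - 1)) (k : Fin n) (ε : Bool) :
    highTw n i (linPoint n (k, ε)) = linPoint n (k, if (i : ℕ) + 2 ≤ k then !ε else ε) := by
  rw [highTw, prod_tw_linPoint (fun j => (i : ℕ) + 2 ≤ j) (List.nodup_finRange n)]
  simp

theorem IsLinLabelling.lowTw_mul_mul_highTw {b : Bool} {s : Fin (n - 1) → Perm (Fin (2 * n))}
    (hs : IsLinLabelling false b s (linPoint n)) :
    IsLinLabelling true b (fun i => lowTw n i * s i * highTw n i) (linPoint n) := by
  intro i hi k ε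
  have hs' := hs i hi k
  simp only [mul_apply, highTw_linPoint, hs']
  split_ifs <;> simp only [lowTw_linPoint, Bool.false_xor, Bool.true_xor] <;> congr 2 <;>
    split_ifs <;> first | rfl | omega

theorem isLinLabelling_linL1Gen : IsLinLabelling false false (linL1Gen n) (linPoint n) := by
  intro i hi k ε
  have hcyc : linL1Gen n ⟨i, by omega⟩ =
      cyc4 (linPoint n (⟨i, by omega⟩, false)) (linPoint n (⟨i + 1, hi⟩, true))
        (linPoint n (⟨i, by omega⟩, true)) (linPoint n (⟨i + 1, hi⟩, false)) := by
    rw [linL1Gen]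
    congr 1 <;> simp [Fin.ext_iff, coe_linPoint_true, add_assoc]
  simp only [hcyc, cyc4, mul_apply, swap_apply_def, EmbeddingLike.apply_eq_iff_eq, Prod.mk.injEq]
  by_cases h₁ : k = ⟨i, by omega⟩
  · cases ε <;> simp [h₁]
  by_cases h₂ : k = ⟨i + 1, hi⟩
  · cases ε <;> simp [h₂]
  · simp [h₁, h₂, mt Fin.ext h₁, mt Fin.ext h₂]

theorem isLinLabelling_linL2Gen : IsLinLabelling true false (linL2Gen n) (linPoint n) :=
  isLinLabelling_linL1Gen.lowTw_mul_mul_highTw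

theorem isLinLabelling_linL3Gen : IsLinLabelling true true (linL3Gen n) (linPoint n) := by
  refine IsLinLabelling.lowTw_mul_mul_highTw (b := true) fun i hi k ε => ?_
  have hswap : swap (⟨i, by omega⟩ : Fin (2 * n)) ⟨n + i + 1, by omega⟩ *
      swap ⟨i + 1, by omega⟩ ⟨n + i, by omega⟩ =
      swap (linPoint n (⟨i, by omega⟩, false)) (linPoint n (⟨i + 1, hi⟩, true)) *
        swap (linPoint n (⟨i + 1, hi⟩, false)) (linPoint n (⟨i, by omega⟩, true)) := by
    congr 2 <;> simp [Fin.ext_iff, coe_linPoint_true, add_assoc]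
  simp only [hswap, mul_apply, swap_apply_def, EmbeddingLike.apply_eq_iff_eq, Prod.mk.injEq]
  by_cases h₁ : k = ⟨i, by omega⟩
  · cases ε <;> simp [h₁]
  by_cases h₂ : k = ⟨i + 1, hi⟩
  · cases ε <;> simp [h₂]
  · simp [h₁, h₂, mt Fin.ext h₁, mt Fin.ext h₂]

end LinHomomorphisms

section BraidGroup

variable {n : ℕ}

/-- The images of the Artin generators, extended by `1`. -/
def generatorImages {G : Type*} [Group G] (ψ : BraidGroup n →* G) (i : ℕ) : G :=
  if h : i < n - 1 then ψ (σ ⟨i, h⟩) else 1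

theorem generatorImages_coe {G : Type*} [Group G] (ψ : BraidGroup n →* G) (i : Fin (n - 1)) :
    generatorImages ψ i = ψ (σ i) :=
  dif_pos i.2

theorem isBraidSeq_generatorImages {G : Type*} [Group G] (ψ : BraidGroup n →* G) :
    IsBraidSeq n (generatorImages ψ) where
  commute i j hij hj := by
    have hrel : σ ⟨i, by omega⟩ * σ ⟨j, by omega⟩ * (σ ⟨j, by omega⟩ * σ ⟨i, by omega⟩)⁻¹ =
        (1 : BraidGroup n) :=
      PresentedGroup.one_of_mem (.inl ⟨⟨i, by omega⟩, ⟨j, by omega⟩, .inl hij, rfl⟩)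
    rw [generatorImages, generatorImages, dif_pos (by omega), dif_pos (by omega)]
    exact Commute.map (mul_inv_eq_one.1 hrel) ψ
  braid i hi := by
    have hrel : σ ⟨i, by omega⟩ * σ ⟨i + 1, by omega⟩ * σ ⟨i, by omega⟩ *
        (σ ⟨i + 1, by omega⟩ * σ ⟨i, by omega⟩ * σ ⟨i + 1, by omega⟩)⁻¹ = (1 : BraidGroup n) :=
      PresentedGroup.one_of_mem (.inr ⟨⟨i, by omega⟩, ⟨i + 1, by omega⟩, rfl, rfl⟩)
    rw [generatorImages, generatorImages, dif_pos (by omega), dif_pos (by omega)]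
    simpa only [map_mul] using congr(ψ $(mul_inv_eq_one.1 hrel))

theorem IsTransitiveHom.isTransitiveSeq {k : ℕ} {ψ : BraidGroup n →* Perm (Fin k)}
    (hψ : IsTransitiveHom ψ) : IsTransitiveSeq n (generatorImages ψ) := by
  intro Z ⟨z, hz⟩ hZ
  have hstable : ∀ g, Set.MapsTo (ψ g) Z Z := by
    intro g
    have hg : g ∈ Subgroup.closure (Set.range (PresentedGroup.of (rels := braidRels n))) := by
      rw [PresentedGroup.closure_range_of]
      trivial
    induction hg using Subgroup.closure_induction with
    | mem x hx =>
      obtain ⟨i, rfl⟩ := hx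
      have := hZ i (by omega)
      rwa [generatorImages_coe] at this
    | one => simpa using Set.mapsTo_id Z
    | mul a b _ _ ha hb => rw [map_mul, coe_mul]; exact ha.comp hb
    | inv a _ ha =>
      rw [map_inv]
      exact perm_symm_mapsTo_of_mapsTo _ ha
  refine Set.eq_univ_of_forall fun x => ?_
  obtain ⟨g, rfl⟩ := hψ z x
  exact hstable g hz

end BraidGroup

theorem IsBraidSeq.exists_isLinLabelling {X : Type u} [Fintype X] {n : ℕ} {s : ℕ → Perm X}
    (hs : IsBraidSeq n s) (hn : 7 ≤ n) (hX : Fintype.card X = 2 * n) (htr : IsTransitiveSeq n s)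
    (hne : s 0 ≠ s 1) : ∃ a b e, IsLinLabelling (n := n) a b (fun i => s i) e := by
  obtain ⟨π, hπ⟩ : ∃ π, IsStrandMap n s π := by
    by_cases hsq : s 0 ^ 2 = 1
    · exact hs.exists_isStrandMap_of_sq_eq_one hn hX htr hsq
    · exact hs.exists_isStrandMap_of_sq_ne_one hn hX htr hne hsq
  exact hπ.exists_isLinLabelling hX hs (by omega)

end

/-- Lin. Let `n ≥ 7`. Every transitive homomorphism
`ψ : B_n → Sym_{2n}` is either cyclic or conjugate to one of the three Lin
homomorphisms `ρ_{L1}, ρ_{L2}, ρ_{L3}`. -/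
theorem transitive_hom_to_sym2n_classification (n : ℕ) (hn : 7 ≤ n)
    (ψ : BraidGroup n →* Equiv.Perm (Fin (2 * n))) (hψ : IsTransitiveHom ψ) :
    IsCyclicHom ψ ∨
      (∃ u : Equiv.Perm (Fin (2 * n)), ∀ i : Fin (n - 1), ψ (σ i) = u * linL1Gen n i * u⁻¹) ∨
      (∃ u : Equiv.Perm (Fin (2 * n)), ∀ i : Fin (n - 1), ψ (σ i) = u * linL2Gen n i * u⁻¹) ∨
      (∃ u : Equiv.Perm (Fin (2 * n)), ∀ i : Fin (n - 1), ψ (σ i) = u * linL3Gen n i * u⁻¹) := by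
  by_cases hne : generatorImages ψ 0 = generatorImages ψ 1
  · have hconst := (isBraidSeq_generatorImages ψ).const_of_zero_eq_one hne
    refine .inl fun i j => ?_
    rw [← generatorImages_coe, ← generatorImages_coe, hconst i (by omega), hconst j (by omega)]
  right
  obtain ⟨a, b, e, he⟩ := (isBraidSeq_generatorImages ψ).exists_isLinLabelling hn
    (Fintype.card_fin _) hψ.isTransitiveSeq hne
  simp only [← generatorImages_coe]
  match a, b with
  | false, false => exact .inl (he.exists_conj isLinLabelling_linL1Gen)
  | true, false => exact .inr (.inl (he.exists_conj isLinLabelling_linL2Gen))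
  | true, true => exact .inr (.inr (he.exists_conj isLinLabelling_linL3Gen))
  | false, true =>
    have : NeZero n := ⟨by omega⟩
    exact absurd he (not_isLinLabelling_false_true hψ.isTransitiveSeq)
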